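/- arXiv:1110.2417 — 11 statements merged into one kernel-verified Lean document; each statement's English description precedes it below -/
import Mathlib

section
/- Let 𝔽_q be a finite field, let 2k ≤ n and δ ≤ k, and let m be a natural number. There exists a set C of k-dimensional subspaces of 𝔽_q^n with |C| = m such that d_S(𝒰, 𝒱) ≥ 2δ for all distinct 𝒰, 𝒱 ∈ C if and only if there exists a set C′ of (n−k)-dimensional subspaces of 𝔽_q^n with |C′| = m such that d_S(𝒰, 𝒱) ≥ 2δ for all distinct 𝒰, 𝒱 ∈ C′. In particular the maximal cardinality A[n, 2δ, k] of a constant dimension code in the Grassmannian G(k, n) with minimum subspace distance 2δ equals A[n, 2δ, n−k]. -/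
/-!
The map `U ↦ Uᗮ` taking the orthogonal complement for the standard dot product on `𝔽^n` is
injective, sends dimension `k` to dimension `n - k`, and preserves the subspace distance: since
`Uᗮ ⊓ Vᗮ = (U ⊔ V)ᗮ` and `dim (U ⊔ V) = 2k - dim (U ⊓ V)`, one has
`(n - k) - dim (Uᗮ ⊓ Vᗮ) = k - dim (U ⊓ V)`. Hence it carries codes of dimension `k` to codes
of dimension `n - k`. The same map with `n - k` in place of `k` gives the converse.
Over a finite field `U ⊓ Uᗮ` may be nonzero, so the complement is treated through the dual
annihilator.
-/

/-- The orthogonal complement of `U` for the standard dot product, encoded as the preimage of the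
dual annihilator of `U` under the identification of `𝔽^n` with its dual by the standard basis. -/
noncomputable def dotPerp {𝔽 : Type*} [Field 𝔽] {n : ℕ} (U : Submodule 𝔽 (Fin n → 𝔽)) :
    Submodule 𝔽 (Fin n → 𝔽) :=
  U.dualAnnihilator.comap
    ((Pi.basisFun 𝔽 (Fin n)).toDualEquiv : (Fin n → 𝔽) →ₗ[𝔽] Module.Dual 𝔽 (Fin n → 𝔽))

lemma dotPerp_injective {𝔽 : Type*} [Field 𝔽] {n : ℕ} :
    Function.Injective (dotPerp : Submodule 𝔽 (Fin n → 𝔽) → Submodule 𝔽 (Fin n → 𝔽)) := by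
  intro U V h
  exact Subspace.dualAnnihilator_inj.mp
    (Submodule.comap_injective_of_surjective (LinearEquiv.surjective _) h)

lemma finrank_add_finrank_dotPerp {𝔽 : Type*} [Field 𝔽] {n : ℕ}
    (U : Submodule 𝔽 (Fin n → 𝔽)) :
    Module.finrank 𝔽 U + Module.finrank 𝔽 (dotPerp U) = n := by
  have h := Subspace.finrank_add_finrank_dualAnnihilator_eq U
  have h2 : Module.finrank 𝔽 (dotPerp U) = Module.finrank 𝔽 U.dualAnnihilator :=
    ((Pi.basisFun 𝔽 (Fin n)).toDualEquiv.ofSubmodule' U.dualAnnihilator).finrank_eq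
  rw [h2, h, Module.finrank_fin_fun]

lemma dotPerp_inf_dotPerp {𝔽 : Type*} [Field 𝔽] {n : ℕ} (U V : Submodule 𝔽 (Fin n → 𝔽)) :
    dotPerp U ⊓ dotPerp V = dotPerp (U ⊔ V) := by
  simp only [dotPerp, Submodule.dualAnnihilator_sup_eq, Submodule.comap_inf]

/-- Orthogonal complements of a code of dimension `k` form a code of dimension `n - k` with the
same cardinality and at least the same minimum distance. -/
lemma exists_code_dotPerp {𝔽 : Type*} [Field 𝔽] {n k δ m : ℕ}
    (h : ∃ C : Finset (Submodule 𝔽 (Fin n → 𝔽)),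
        C.card = m ∧
        (∀ U ∈ C, Module.finrank 𝔽 U = k) ∧
        (∀ U ∈ C, ∀ V ∈ C, U ≠ V →
          2 * δ ≤ 2 * (k - Module.finrank 𝔽 (U ⊓ V : Submodule 𝔽 (Fin n → 𝔽))))) :
    ∃ C' : Finset (Submodule 𝔽 (Fin n → 𝔽)),
        C'.card = m ∧
        (∀ U ∈ C', Module.finrank 𝔽 U = n - k) ∧
        (∀ U ∈ C', ∀ V ∈ C', U ≠ V →
          2 * δ ≤ 2 * ((n - k) - Module.finrank 𝔽 (U ⊓ V : Submodule 𝔽 (Fin n → 𝔽)))) := by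
  obtain ⟨C, hC, hdim, hdist⟩ := h
  refine ⟨C.map ⟨dotPerp, dotPerp_injective⟩, by rw [Finset.card_map, hC], ?_, ?_⟩
  · simp only [Finset.mem_map, Function.Embedding.coeFn_mk]
    rintro _ ⟨U, hU, rfl⟩
    have := finrank_add_finrank_dotPerp U
    have := hdim U hU
    omega
  · simp only [Finset.mem_map, Function.Embedding.coeFn_mk]
    rintro _ ⟨U, hU, rfl⟩ _ ⟨V, hV, rfl⟩ hne
    have hd := hdist U hU V hV (fun h => hne (congrArg dotPerp h))
    rw [dotPerp_inf_dotPerp]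
    have := finrank_add_finrank_dotPerp (U ⊔ V)
    have := Submodule.finrank_sup_add_finrank_inf_eq U V
    have := hdim U hU
    have := hdim V hV
    omega


/-- Over a finite field `𝔽_q`, with `2k ≤ n` and `δ ≤ k`, a constant
dimension code of `m` many `k`-dimensional subspaces of `𝔽_q^n` with minimum subspace
distance `2δ` exists iff a constant dimension code of `m` many `(n−k)`-dimensional
subspaces with minimum subspace distance `2δ` exists; in particular
`A[n, 2δ, k] = A[n, 2δ, n−k]`. -/
theorem codes_orthogonal_complement
    (𝔽 : Type*) [Field 𝔽] [Fintype 𝔽] (n k δ m : ℕ)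
    (hkn : 2 * k ≤ n) (hδ : δ ≤ k) :
    (∃ C : Finset (Submodule 𝔽 (Fin n → 𝔽)),
        C.card = m ∧
        (∀ U ∈ C, Module.finrank 𝔽 U = k) ∧
        (∀ U ∈ C, ∀ V ∈ C, U ≠ V →
          2 * δ ≤ 2 * (k - Module.finrank 𝔽 (U ⊓ V : Submodule 𝔽 (Fin n → 𝔽))))) ↔
    (∃ C' : Finset (Submodule 𝔽 (Fin n → 𝔽)),
        C'.card = m ∧
        (∀ U ∈ C', Module.finrank 𝔽 U = n - k) ∧
        (∀ U ∈ C', ∀ V ∈ C', U ≠ V →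
          2 * δ ≤ 2 * ((n - k) - Module.finrank 𝔽 (U ⊓ V : Submodule 𝔽 (Fin n → 𝔽))))) := by
  refine ⟨exists_code_dotPerp, fun h => ?_⟩
  have h' := exists_code_dotPerp h
  rwa [show n - (n - k) = k by omega] at h'
end

section
/- Let 𝔽 be a field and let U and V be k×n matrices over 𝔽, both in reduced row echelon form with the same strictly increasing pivot map p : {0,…,k−1} → {0,…,n−1} (i.e., U and V have the same identifying vector). Then the subspace distance between their row spaces equals twice the rank distance of the matrices: k − dim(rowspace U ∩ rowspace V) = rank(U − V). (Note that U − V vanishes on all pivot columns, so rank(U − V) equals the rank distance of the submatrices of U and V obtained by deleting the pivot columns.) -/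
/-!
Evaluating `x ᵥ* U` at the pivot columns returns the coefficient vector `x`, and likewise for `V`.
Hence `x ↦ x ᵥ* U` is injective, and if `x ᵥ* U = y ᵥ* V` then `x = y`, i.e. `x ᵥ* (U - V) = 0`.
So the intersection of the two row spaces is the isomorphic image under `x ↦ x ᵥ* U` of the left
kernel of `U - V`, which has dimension `k - rank (U - V)` by rank–nullity.
-/

open Matrix in
/-- A vector in the row space of a matrix with identity pivot columns carries its coefficients
at the pivot positions. -/
lemma vecMul_apply_pivot {𝔽 : Type*} [Field 𝔽] {n k : ℕ} {U : Matrix (Fin k) (Fin n) 𝔽}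
    {p : Fin k → Fin n} (hU : ∀ i j : Fin k, U i (p j) = if i = j then 1 else 0)
    (x : Fin k → 𝔽) (j : Fin k) : (x ᵥ* U) (p j) = x j := by
  simp [Matrix.vecMul, dotProduct, hU]

open Matrix in
/-- The row spaces of two matrices with the same identity pivot columns meet in the image of the
left kernel of their difference. -/
lemma rowSpace_inf_eq_map_ker {𝔽 : Type*} [Field 𝔽] {n k : ℕ} {U V : Matrix (Fin k) (Fin n) 𝔽}
    {p : Fin k → Fin n} (hU : ∀ i j : Fin k, U i (p j) = if i = j then 1 else 0)
    (hV : ∀ i j : Fin k, V i (p j) = if i = j then 1 else 0) :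
    (Submodule.span 𝔽 (Set.range U) ⊓ Submodule.span 𝔽 (Set.range V) : Submodule 𝔽 (Fin n → 𝔽)) =
      (LinearMap.ker (U - V).vecMulLinear).map U.vecMulLinear := by
  have hrU : Submodule.span 𝔽 (Set.range U) = LinearMap.range U.vecMulLinear :=
    (range_vecMulLinear U).symm
  have hrV : Submodule.span 𝔽 (Set.range V) = LinearMap.range V.vecMulLinear :=
    (range_vecMulLinear V).symm
  rw [hrU, hrV]
  ext w
  simp only [Submodule.mem_inf, LinearMap.mem_range, Submodule.mem_map, LinearMap.mem_ker,
    vecMulLinear_apply, vecMul_sub, sub_eq_zero]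
  constructor
  · rintro ⟨⟨x, rfl⟩, y, hy⟩
    have hyx : y = x := by
      funext j
      rw [← vecMul_apply_pivot hV y j, hy, vecMul_apply_pivot hU]
    subst hyx
    exact ⟨y, hy.symm, rfl⟩
  · rintro ⟨x, hx, rfl⟩
    exact ⟨⟨x, rfl⟩, x, hx.symm⟩

/-- If `U` and `V` are k×n matrices in reduced row echelon form with the same
(strictly increasing) pivot map `p` (i.e. the same identifying vector), then the subspace
distance between their row spaces equals twice the rank distance of the matrices:
`k − dim(rowspace U ⊓ rowspace V) = rank (U − V)`. -/
theorem subspace_distance_eq_rank_distance_same_cell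
    (𝔽 : Type*) [Field 𝔽] (n k : ℕ)
    (U V : Matrix (Fin k) (Fin n) 𝔽)
    (p : Fin k → Fin n) (hp : StrictMono p)
    (hUpiv : ∀ i j : Fin k, U i (p j) = if i = j then 1 else 0)
    (hVpiv : ∀ i j : Fin k, V i (p j) = if i = j then 1 else 0)
    (hUech : ∀ (i : Fin k) (c : Fin n), (c : ℕ) < (p i : ℕ) → U i c = 0)
    (hVech : ∀ (i : Fin k) (c : Fin n), (c : ℕ) < (p i : ℕ) → V i c = 0) :
    k - Module.finrank 𝔽
        ((Submodule.span 𝔽 (Set.range U) ⊓ Submodule.span 𝔽 (Set.range V) :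
          Submodule 𝔽 (Fin n → 𝔽))) = (U - V).rank := by
  have hinj : Function.Injective U.vecMulLinear := fun x y hxy => by
    funext j
    rw [← vecMul_apply_pivot hUpiv x j, ← vecMul_apply_pivot hUpiv y j]
    exact congrFun hxy (p j)
  have hdim := LinearMap.finrank_range_add_finrank_ker (U - V).vecMulLinear
  have hrank : (U - V).rank = Module.finrank 𝔽 (LinearMap.range (U - V).vecMulLinear) := by
    rw [range_vecMulLinear, Matrix.rank_eq_finrank_span_row]
  rw [Module.finrank_fin_fun] at hdim
  rw [rowSpace_inf_eq_map_ker hUpiv hVpiv, ← (Submodule.equivMapOfInjective _ hinj _).finrank_eq, hrank]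
  omega
end

section
/- Let 𝔽 be a field and let U and V be k×n matrices over 𝔽 in reduced row echelon form with strictly increasing pivot maps p, q : {0,…,k−1} → {0,…,n−1} respectively. Then the subspace distance between their row spaces is bounded below by the Hamming distance of their identifying vectors: 2(k − dim(rowspace U ∩ rowspace V)) ≥ d_H(v(U), v(V)), where d_H(v(U), v(V)) is the number of positions in {0,…,n−1} belonging to exactly one of the ranges of p and q. -/
/-!
Write `P`, `Q` for the ranges of the pivot maps and `W` for the intersection of the row spaces.
The first nonzero coordinate of a vector in a row space is a pivot position
(`apply_eq_zero_of_not_pivot`), so the first nonzero coordinate of a vector in `W` lies in `P ∩ Q`.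
Hence restricting coordinates to `P ∩ Q` is injective on `W`, which gives `dim W ≤ |P ∩ Q|`.
Since `|P| = |Q| = k`, the symmetric difference of `P` and `Q` has `2 (k - |P ∩ Q|)` elements, which
is therefore at most `2 (k - dim W)`.
-/

/-- If a vector in the row space of an echelon matrix vanishes before position `c`, and `c` is not a
pivot position, then it vanishes at `c` too: the coefficient of row `i` in the vector is its entry
at `p i`, so rows with pivot before `c` do not occur, and the others are zero at `c`. -/
theorem apply_eq_zero_of_not_pivot {𝔽 : Type*} [Field 𝔽] {n k : ℕ}
    {U : Matrix (Fin k) (Fin n) 𝔽} {p : Fin k → Fin n}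
    (hUpiv : ∀ i j : Fin k, U i (p j) = if i = j then 1 else 0)
    (hUech : ∀ (i : Fin k) (c : Fin n), (c : ℕ) < (p i : ℕ) → U i c = 0)
    {w : Fin n → 𝔽} (hw : w ∈ Submodule.span 𝔽 (Set.range U)) {c : Fin n}
    (hc : c ∉ Finset.image p Finset.univ) (hlt : ∀ d < c, w d = 0) : w c = 0 := by
  obtain ⟨a, rfl⟩ := (Submodule.mem_span_range_iff_exists_fun 𝔽).1 hw
  have ha : ∀ j, (∑ i, a i • U i) (p j) = a j := fun j => by
    simp [Finset.sum_apply, hUpiv]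
  rw [Finset.sum_apply]
  refine Finset.sum_eq_zero fun i _ => ?_
  rcases lt_trichotomy (p i) c with h | h | h
  · have := hlt _ h
    rw [ha] at this
    simp [this]
  · exact absurd (Finset.mem_image.2 ⟨i, Finset.mem_univ _, h⟩) hc
  · simp [hUech i c h]

/-- For k×n matrices `U`, `V` in reduced row echelon form with strictly
increasing pivot maps `p`, `q` respectively, the subspace distance between their row spaces
is at least the Hamming distance of their identifying vectors, i.e. at least the number of
positions lying in exactly one of the ranges of `p` and `q`. -/
theorem subspace_distance_ge_hamming_distance
    (𝔽 : Type*) [Field 𝔽] (n k : ℕ)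
    (U V : Matrix (Fin k) (Fin n) 𝔽)
    (p q : Fin k → Fin n) (hp : StrictMono p) (hq : StrictMono q)
    (hUpiv : ∀ i j : Fin k, U i (p j) = if i = j then 1 else 0)
    (hVpiv : ∀ i j : Fin k, V i (q j) = if i = j then 1 else 0)
    (hUech : ∀ (i : Fin k) (c : Fin n), (c : ℕ) < (p i : ℕ) → U i c = 0)
    (hVech : ∀ (i : Fin k) (c : Fin n), (c : ℕ) < (q i : ℕ) → V i c = 0) :
    (symmDiff (Finset.image p Finset.univ) (Finset.image q Finset.univ)).card ≤
      2 * (k - Module.finrank 𝔽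
        ((Submodule.span 𝔽 (Set.range U) ⊓ Submodule.span 𝔽 (Set.range V) :
          Submodule 𝔽 (Fin n → 𝔽)))) := by
  set P := Finset.image p Finset.univ with hP
  set Q := Finset.image q Finset.univ with hQ
  set W : Submodule 𝔽 (Fin n → 𝔽) :=
    Submodule.span 𝔽 (Set.range U) ⊓ Submodule.span 𝔽 (Set.range V) with hW
  have hdim : Module.finrank 𝔽 W ≤ (P ∩ Q).card := by
    let f : W →ₗ[𝔽] (↥(P ∩ Q) → 𝔽) := (LinearMap.funLeft 𝔽 𝔽 Subtype.val).comp W.subtype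
    have hf : Function.Injective f := by
      rw [← LinearMap.ker_eq_bot, LinearMap.ker_eq_bot']
      rintro ⟨w, hwU, hwV⟩ hfw
      have hzero : ∀ c, w c = 0 := fun c => by
        induction c using WellFoundedLT.induction with
        | ind c ih =>
          by_cases hcP : c ∈ P
          · by_cases hcQ : c ∈ Q
            · exact congrFun hfw ⟨c, Finset.mem_inter.2 ⟨hcP, hcQ⟩⟩
            · exact apply_eq_zero_of_not_pivot hVpiv hVech hwV hcQ ih
          · exact apply_eq_zero_of_not_pivot hUpiv hUech hwU hcP ih
      exact Subtype.ext (funext hzero)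
    simpa only [Module.finrank_fintype_fun_eq_card, Fintype.card_coe] using
      LinearMap.finrank_le_finrank_of_injective hf
  have hPk : P.card = k := by
    rw [hP, Finset.card_image_of_injective _ hp.injective, Finset.card_fin]
  have hQk : Q.card = k := by
    rw [hQ, Finset.card_image_of_injective _ hq.injective, Finset.card_fin]
  have hsymm : (symmDiff P Q).card ≤ (P \ Q).card + (Q \ P).card := Finset.card_union_le _ _
  have hPQ := Finset.card_sdiff_add_card_inter P Q
  have hQP := Finset.card_sdiff_add_card_inter Q P
  rw [Finset.inter_comm] at hQP
  omega
end

section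
/- Let 𝔽_q be a finite field with q elements, let F be a Ferrers diagram inside an m×l grid, let δ ≥ 1, and let C be a Ferrers diagram code for F with minimum rank distance δ, i.e., a set of m×l matrices over 𝔽_q, each supported inside F, such that rank(X − Y) ≥ δ for all distinct X, Y ∈ C. Then for every i with 0 ≤ i ≤ δ−1, |C| ≤ q^{w_i}, where w_i is the number of dots of F that are not contained in the first i rows and not contained in the rightmost δ−1−i columns. In particular |C| ≤ q^{min_{0 ≤ i ≤ δ−1} w_i}. -/
/-!
The argument is a puncturing argument. Put `k = δ - 1 - i` and let `W` be the set of dots of `F`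
outside the first `i` rows and the rightmost `k` columns. If two codewords agree on `W`, their
difference `Z` vanishes outside `i` rows and `k` columns, because every codeword vanishes off `F`.
Such a matrix has rank at most `i + k = δ - 1` (`rank_le_of_support`), so the two codewords
coincide. Restriction to `W` is thus an injection of `C` into the functions `W → 𝔽`, of which
there are `q ^ |W|`.
-/

lemma matrix_rank_add_le {K : Type*} [Field K] {m l : ℕ} (A B : Matrix (Fin m) (Fin l) K) :
    (A + B).rank ≤ A.rank + B.rank := by
  unfold Matrix.rank
  rw [Matrix.mulVecLin_add]
  exact (Submodule.finrank_mono (LinearMap.range_add_le _ _)).trans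
    (Submodule.finrank_add_le_finrank_add_finrank _ _)

/-- A matrix whose nonzero entries all lie in the rows in `R` or the columns in `S` has rank at
most `|R| + |S|`: split it as `D * Z + (1 - D) * Z` with `D` the diagonal projection onto `R`;
the second summand is fixed by the diagonal projection onto `S` acting on the right. -/
lemma rank_le_of_support {K : Type*} [Field K] {m l : ℕ} (Z : Matrix (Fin m) (Fin l) K)
    (R : Finset (Fin m)) (S : Finset (Fin l))
    (hZ : ∀ a b, a ∉ R → b ∉ S → Z a b = 0) : Z.rank ≤ R.card + S.card := by
  classical
  have hdiag : ∀ {n : ℕ} (T : Finset (Fin n)),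
      (Matrix.diagonal (fun a => if a ∈ T then (1 : K) else 0)).rank = T.card := by
    intro n T
    rw [Matrix.rank_diagonal]
    simp
  have hsplit : Z = Matrix.diagonal (fun a => if a ∈ R then (1 : K) else 0) * Z +
      (Matrix.of fun a b => if a ∈ R then 0 else Z a b) *
        Matrix.diagonal (fun b => if b ∈ S then (1 : K) else 0) := by
    ext a b
    rw [Matrix.add_apply, Matrix.diagonal_mul, Matrix.mul_diagonal, Matrix.of_apply]
    by_cases ha : a ∈ R <;> by_cases hb : b ∈ S <;> simp [ha, hb, hZ]
  rw [hsplit]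
  refine (matrix_rank_add_le _ _).trans (Nat.add_le_add ?_ ?_)
  · exact (Matrix.rank_mul_le_left _ _).trans (hdiag R).le
  · exact (Matrix.rank_mul_le_right _ _).trans (hdiag S).le

/-- (Etzion–Silberstein bound) Let `F` be a Ferrers diagram inside an `m × l`
grid and let `C` be a set of `m × l` matrices over `𝔽_q` supported inside `F` with pairwise
rank distance at least `δ ≥ 1`. Then for every `0 ≤ i ≤ δ − 1`, `|C| ≤ q^{w_i}` where `w_i`
is the number of dots of `F` neither in the first `i` rows nor in the rightmost `δ − 1 − i`
columns. -/
theorem ferrers_diagram_code_bound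
    (𝔽 : Type*) [Field 𝔽] [Fintype 𝔽] (q : ℕ) (hq : Fintype.card 𝔽 = q)
    (m l δ : ℕ) (hδ : 1 ≤ δ)
    (F : Finset (Fin m × Fin l))
    (hFright : ∀ i : Fin m, ∀ j j' : Fin l, (i, j) ∈ F → j ≤ j' → (i, j') ∈ F)
    (hFup : ∀ i i' : Fin m, ∀ j : Fin l, (i, j) ∈ F → i' ≤ i → (i', j) ∈ F)
    (C : Finset (Matrix (Fin m) (Fin l) 𝔽))
    (hsupp : ∀ X ∈ C, ∀ p : Fin m × Fin l, p ∉ F → X p.1 p.2 = 0)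
    (hdist : ∀ X ∈ C, ∀ Y ∈ C, X ≠ Y → δ ≤ (X - Y).rank) :
    ∀ i : ℕ, i ≤ δ - 1 →
      C.card ≤ q ^ (F.filter
        (fun p => i ≤ (p.1 : ℕ) ∧ (p.2 : ℕ) < l - (δ - 1 - i))).card := by
  classical
  intro i hi
  set W := F.filter (fun p => i ≤ (p.1 : ℕ) ∧ (p.2 : ℕ) < l - (δ - 1 - i)) with hW
  have hcard : (Finset.univ : Finset (W → 𝔽)).card = q ^ W.card := by
    rw [Finset.card_univ, Fintype.card_fun, hq, Fintype.card_coe]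
  rw [← hcard]
  refine Finset.card_le_card_of_injOn (fun X p => X p.1.1 p.1.2) (fun _ _ => by simp) ?_
  intro X hX Y hY hXY
  by_contra hne
  have hX' : X ∈ C := hX
  have hY' : Y ∈ C := hY
  have hrank := rank_le_of_support (X - Y)
    (Finset.univ.filter fun a : Fin m => (a : ℕ) < i)
    (Finset.univ.filter fun b : Fin l => l - (δ - 1 - i) ≤ (b : ℕ)) (by
      intro a b ha hb
      simp only [Finset.mem_filter, Finset.mem_univ, true_and, not_lt, not_le] at ha hb
      rw [Matrix.sub_apply, sub_eq_zero]
      by_cases hF : (a, b) ∈ F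
      · exact congrFun hXY ⟨(a, b), Finset.mem_filter.2 ⟨hF, ha, hb⟩⟩
      · rw [hsupp X hX' (a, b) hF, hsupp Y hY' (a, b) hF])
  have hR : (Finset.univ.filter fun a : Fin m => (a : ℕ) < i).card ≤ i := by
    rw [Fin.card_filter_val_lt]
    exact min_le_right _ _
  -- The truncation in `l - (δ - 1 - i)` is harmless: if it occurs, all `l ≤ δ - 1 - i`
  -- columns are counted.
  have hS : (Finset.univ.filter fun b : Fin l => l - (δ - 1 - i) ≤ (b : ℕ)).card
      ≤ δ - 1 - i := by
    have hadd := Finset.card_filter_add_card_filter_not (s := (Finset.univ : Finset (Fin l)))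
      (fun b : Fin l => (b : ℕ) < l - (δ - 1 - i))
    simp only [not_lt, Fin.card_filter_val_lt, Finset.card_univ, Fintype.card_fin] at hadd
    omega
  have hd := hdist X hX' Y hY' hne
  omega
end

section
/- Let 𝔽_q be a finite field with q elements, let a ≥ b, let δ ≥ 1, and let F be a Ferrers diagram inside an a×b grid such that each of the rightmost δ−1 columns of F contains a dots (i.e., is full). Then the maximal dimension of an 𝔽_q-linear Ferrers diagram code for F with minimum rank distance δ equals Σ_{i=1}^{b−δ+1} γ_i, where γ_i is the number of dots in the i-th column of F (counted from the left); that is, there exists an 𝔽_q-linear subspace C of a×b matrices supported inside F with rank(X) ≥ δ for every nonzero X ∈ C and dim C = Σ_{i=1}^{b−δ+1} γ_i, and every such linear code has dimension at most Σ_{i=1}^{b−δ+1} γ_i. -/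
/-!
Write `k = b - (δ - 1)`, so that the columns `0, …, k - 1` are the ones counted by the formula.

*Upper bound.* A matrix whose first `k` columns vanish has at most `b - k ≤ δ - 1` nonzero columns,
hence rank `< δ` (`rank_le_of_cols_eq_zero`). So a codeword is determined by its entries at the dots
of `F` in the first `k` columns, and the dimension is at most the number of these dots.

*Construction.* Take a Gabidulin code in systematic form. Let `K` be the extension of `𝔽` of degree
`a`; since `b ≤ a`, one can choose `b` elements of `K` that are linearly independent over `𝔽`. A
nonzero `q`-polynomial `x ↦ ∑_{i < k} c i * x ^ (q ^ i)` is `𝔽`-linear with kernel of dimension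
at most `k - 1` (`finrank_ker_qPoly_lt`), so evaluating it at the `b` chosen elements and expanding
in a basis of `K` gives an `a × b` matrix of rank at least `b - k + 1`. By the rank bound above, such
a matrix is determined by its first `k` columns, and both spaces have dimension `a * k`: the first
`k` columns can therefore be prescribed arbitrarily (`exists_systematic_mrd_code`). Prescribing them
inside `F` gives codewords supported in `F`, as the remaining columns of `F` are full.
-/

open Module

/-- The dimension of the space of columns counts at most the columns that can be nonzero. -/
lemma rank_le_of_cols_eq_zero {𝔽 : Type*} [Field 𝔽] {a b k : ℕ} (X : Matrix (Fin a) (Fin b) 𝔽)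
    (h : ∀ i, ∀ j : Fin b, (j : ℕ) < k → X i j = 0) : X.rank ≤ b - k := by
  classical
  let s : Finset (Fin b) := Finset.univ.filter (fun j => ¬ (j : ℕ) < k)
  have hs : s.card ≤ b - k := by
    have h1 : (s.map Fin.valEmbedding) ⊆ Finset.Ico k b := by
      intro x hx
      simp only [s, Finset.mem_map, Finset.mem_filter, Finset.mem_univ, true_and,
        Fin.valEmbedding_apply] at hx
      obtain ⟨j, hj, rfl⟩ := hx
      exact Finset.mem_Ico.2 ⟨not_lt.1 hj, j.2⟩
    simpa using Finset.card_le_card h1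
  rw [Matrix.rank_eq_finrank_span_cols]
  have hle : Submodule.span 𝔽 (Set.range X.col) ≤
      Submodule.span 𝔽 ((s.image X.col : Finset (Fin a → 𝔽)) : Set (Fin a → 𝔽)) := by
    rw [Submodule.span_le]
    rintro _ ⟨j, rfl⟩
    by_cases hj : (j : ℕ) < k
    · have : X.col j = 0 := by
        ext i
        exact h i j hj
      rw [this]
      exact Submodule.zero_mem _
    · exact Submodule.subset_span (Finset.mem_coe.2 (Finset.mem_image_of_mem _ (by simpa [s] using hj)))
  calc finrank 𝔽 (Submodule.span 𝔽 (Set.range X.col))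
      ≤ _ := Submodule.finrank_mono hle
    _ ≤ (s.image X.col).card := finrank_span_finset_le_card _
    _ ≤ s.card := Finset.card_image_le
    _ ≤ b - k := hs

/-- The `q`-polynomial `x ↦ ∑_{i < k} c i * x ^ (q ^ i)`, where `q = |𝔽|`, as an `𝔽`-linear
endomorphism of `K`. It depends linearly on the vector `c` of its coefficients. -/
noncomputable def qPoly (𝔽 K : Type*) [Field 𝔽] [Fintype 𝔽] [Field K] [Algebra 𝔽 K] (k : ℕ) :
    (Fin k → K) →ₗ[𝔽] (K →ₗ[𝔽] K) :=
  (Fintype.linearCombination K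
    (fun i : Fin k => ((FiniteField.frobeniusAlgHom 𝔽 K) ^ (i : ℕ)).toLinearMap)).restrictScalars 𝔽

lemma qPoly_apply (𝔽 K : Type*) [Field 𝔽] [Fintype 𝔽] [Field K] [Algebra 𝔽 K] {k : ℕ}
    (c : Fin k → K) (x : K) :
    qPoly 𝔽 K k c x = ∑ i, c i * x ^ (Fintype.card 𝔽 ^ (i : ℕ)) := by
  simp [qPoly, Fintype.linearCombination_apply, LinearMap.sum_apply, AlgHom.coe_pow,
    FiniteField.coe_frobeniusAlgHom, pow_iterate]

/-- A nonzero `q`-polynomial has ordinary degree at most `q ^ (k - 1)`, so at most that many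
roots, while its kernel has `q ^ d` elements if it has dimension `d`. -/
lemma finrank_ker_qPoly_lt (𝔽 K : Type*) [Field 𝔽] [Fintype 𝔽] [Field K] [Algebra 𝔽 K]
    [FiniteDimensional 𝔽 K] {k : ℕ} (c : Fin k → K) (hc : c ≠ 0) :
    finrank 𝔽 (LinearMap.ker (qPoly 𝔽 K k c)) < k := by
  classical
  set q := Fintype.card 𝔽 with hq
  have hq1 : 1 < q := Fintype.one_lt_card
  obtain ⟨i₀, hi₀⟩ := Function.ne_iff.1 hc
  let P : Polynomial K := ∑ i : Fin k, Polynomial.C (c i) * Polynomial.X ^ (q ^ (i : ℕ))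
  have hcoeff : P.coeff (q ^ (i₀ : ℕ)) = c i₀ := by
    simp only [P, Polynomial.finsetSum_coeff, Polynomial.coeff_C_mul, Polynomial.coeff_X_pow]
    rw [Finset.sum_eq_single i₀]
    · simp
    · intro j _ hj
      rw [if_neg, mul_zero]
      intro h
      exact hj (Fin.ext (Nat.pow_right_injective hq1 h).symm)
    · simp
  have hP : P ≠ 0 := by
    intro h
    rw [h] at hcoeff
    exact hi₀ (by simpa using hcoeff.symm)
  have hdeg : P.natDegree ≤ q ^ (k - 1) := by
    apply Polynomial.natDegree_sum_le_of_forall_le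
    intro i _
    refine (Polynomial.natDegree_C_mul_X_pow_le _ _).trans ?_
    exact Nat.pow_le_pow_right (by omega) (by omega)
  have : Finite K := Module.finite_of_finite 𝔽
  have hsub : (LinearMap.ker (qPoly 𝔽 K k c) : Set K) ⊆ (P.roots.toFinset : Set K) := by
    intro x hx
    have hx' : qPoly 𝔽 K k c x = 0 := hx
    rw [qPoly_apply] at hx'
    simp only [Finset.mem_coe, Multiset.mem_toFinset, Polynomial.mem_roots hP,
      Polynomial.IsRoot.def, P, Polynomial.eval_finsetSum, Polynomial.eval_mul,
      Polynomial.eval_C, Polynomial.eval_pow, Polynomial.eval_X]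
    exact hx'
  have hcard : Nat.card (LinearMap.ker (qPoly 𝔽 K k c)) ≤ q ^ (k - 1) := by
    calc Nat.card (LinearMap.ker (qPoly 𝔽 K k c))
        = (LinearMap.ker (qPoly 𝔽 K k c) : Set K).ncard := (Nat.card_coe_set_eq _)
      _ ≤ (P.roots.toFinset : Set K).ncard := Set.ncard_le_ncard hsub (Finset.finite_toSet _)
      _ = P.roots.toFinset.card := Set.ncard_coe_finset _
      _ ≤ Multiset.card P.roots := Multiset.toFinset_card_le _
      _ ≤ P.natDegree := P.card_roots'
      _ ≤ _ := hdeg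
  rw [Module.natCard_eq_pow_finrank (K := 𝔽), Nat.card_eq_fintype_card, ← hq] at hcard
  have := (Nat.pow_le_pow_iff_right hq1).1 hcard
  have := i₀.2
  omega

/-- A maximum rank distance code in systematic form: the minimum distance is `b - k + 1`, and the
first `k` columns of a codeword can be prescribed arbitrarily. -/
lemma exists_systematic_mrd_code (𝔽 : Type*) [Field 𝔽] [Fintype 𝔽] {a b k : ℕ}
    (hab : b ≤ a) (hk : 1 ≤ k) (hkb : k ≤ b) :
    ∃ D : Submodule 𝔽 (Matrix (Fin a) (Fin b) 𝔽),
      (∀ X ∈ D, X ≠ 0 → b - k + 1 ≤ X.rank) ∧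
      ∀ Y : Matrix (Fin a) (Fin b) 𝔽, ∃ X ∈ D, ∀ i, ∀ j : Fin b, (j : ℕ) < k → X i j = Y i j := by
  classical
  obtain ⟨p, hp⟩ := CharP.exists 𝔽
  have : Fact p.Prime := ⟨CharP.char_is_prime 𝔽 p⟩
  have : NeZero a := ⟨by omega⟩
  let K := FiniteField.Extension 𝔽 p a
  have hK : finrank 𝔽 K = a := FiniteField.finrank_extension 𝔽 p a
  let B : Basis (Fin a) 𝔽 K := finBasisOfFinrankEq 𝔽 K hK
  let v : Fin b → K := fun j => B (Fin.castLE hab j)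
  have hv : LinearIndependent 𝔽 v :=
    B.linearIndependent.comp _ (Fin.castLE_injective hab)
  let ev : (Fin b → 𝔽) →ₗ[𝔽] K := Fintype.linearCombination 𝔽 v
  have hev : Function.Injective ev := hv.fintypeLinearCombination_injective
  -- The code matrix of `c`: evaluate at the `v j` and expand in the basis `B`.
  let Ψ : (Fin k → K) →ₗ[𝔽] Matrix (Fin a) (Fin b) 𝔽 :=
    (LinearMap.toMatrix (Pi.basisFun 𝔽 (Fin b)) B).toLinearMap ∘ₗ
      (LinearMap.lcomp 𝔽 K ev) ∘ₗ qPoly 𝔽 K k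
  have hrank : ∀ c, c ≠ 0 → b - k + 1 ≤ (Ψ c).rank := by
    intro c hc
    have h1 : (Ψ c).rank = finrank 𝔽 (LinearMap.range (qPoly 𝔽 K k c ∘ₗ ev)) := by
      rw [Matrix.rank_eq_finrank_range_toLin _ B (Pi.basisFun 𝔽 (Fin b))]
      rw [show Ψ c = LinearMap.toMatrix (Pi.basisFun 𝔽 (Fin b)) B (qPoly 𝔽 K k c ∘ₗ ev) from rfl,
        Matrix.toLin_toMatrix]
    have h2 := LinearMap.finrank_range_add_finrank_ker (qPoly 𝔽 K k c ∘ₗ ev)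
    have h3 : finrank 𝔽 (LinearMap.ker (qPoly 𝔽 K k c ∘ₗ ev)) ≤
        finrank 𝔽 (LinearMap.ker (qPoly 𝔽 K k c)) := by
      refine LinearMap.finrank_le_finrank_of_injective
        (f := ev.restrict (p := LinearMap.ker (qPoly 𝔽 K k c ∘ₗ ev))
          (q := LinearMap.ker (qPoly 𝔽 K k c)) (fun x hx => hx)) ?_
      intro x y hxy
      exact Subtype.ext (hev (congrArg Subtype.val hxy))
    have h4 := finrank_ker_qPoly_lt 𝔽 K c hc
    rw [finrank_fin_fun] at h2
    omega
  -- Restriction to the first `k` columns.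
  let Q : Matrix (Fin a) (Fin b) 𝔽 →ₗ[𝔽] (Fin a → Fin k → 𝔽) :=
    { toFun := fun X i j => X i (Fin.castLE hkb j)
      map_add' := fun _ _ => rfl
      map_smul' := fun _ _ => rfl }
  have hinj : Function.Injective (Q ∘ₗ Ψ) := by
    rw [← LinearMap.ker_eq_bot, LinearMap.ker_eq_bot']
    intro c hc
    by_contra hne
    have h1 := hrank c hne
    have h2 : (Ψ c).rank ≤ b - k := rank_le_of_cols_eq_zero _ fun i j hj =>
      congrFun (congrFun hc i) ⟨j, hj⟩
    omega
  have hsurj : Function.Surjective (Q ∘ₗ Ψ) := by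
    refine (LinearMap.injective_iff_surjective_of_finrank_eq_finrank ?_).1 hinj
    simp [Module.finrank_pi_fintype, hK, mul_comm]
  refine ⟨LinearMap.range Ψ, ?_, ?_⟩
  · rintro _ ⟨c, rfl⟩ hX
    exact hrank c fun h => hX (by rw [h, map_zero])
  · intro Y
    obtain ⟨c, hc⟩ := hsurj (Q Y)
    exact ⟨Ψ c, ⟨c, rfl⟩, fun i j hj => congrFun (congrFun hc i) ⟨j, hj⟩⟩

/-- Let `a ≥ b`, `δ ≥ 1`, and let `F` be a Ferrers diagram in an `a × b` grid
whose rightmost `δ − 1` columns are full. Then the maximal dimension of an `𝔽_q`-linear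
Ferrers diagram code for `F` with minimum rank distance `δ` equals
`Σ_{i=1}^{b−δ+1} γ_i`, where `γ_i` is the number of dots in the `i`-th column of `F`. -/
theorem ferrers_code_dim_full_right_columns
    (𝔽 : Type*) [Field 𝔽] [Fintype 𝔽]
    (a b δ : ℕ) (hab : b ≤ a) (hδ : 1 ≤ δ)
    (F : Finset (Fin a × Fin b))
    (hFright : ∀ i : Fin a, ∀ j j' : Fin b, (i, j) ∈ F → j ≤ j' → (i, j') ∈ F)
    (hFup : ∀ i i' : Fin a, ∀ j : Fin b, (i, j) ∈ F → i' ≤ i → (i', j) ∈ F)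
    (hfull : ∀ j : Fin b, b - (δ - 1) ≤ (j : ℕ) → ∀ i : Fin a, (i, j) ∈ F) :
    (∃ C : Submodule 𝔽 (Matrix (Fin a) (Fin b) 𝔽),
        (∀ X ∈ C, ∀ p : Fin a × Fin b, p ∉ F → X p.1 p.2 = 0) ∧
        (∀ X ∈ C, X ≠ 0 → δ ≤ X.rank) ∧
        Module.finrank 𝔽 C =
          ∑ j ∈ Finset.univ.filter (fun j : Fin b => (j : ℕ) < b - (δ - 1)),
            (F.filter (fun p => p.2 = j)).card) ∧
    (∀ C : Submodule 𝔽 (Matrix (Fin a) (Fin b) 𝔽),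
        (∀ X ∈ C, ∀ p : Fin a × Fin b, p ∉ F → X p.1 p.2 = 0) →
        (∀ X ∈ C, X ≠ 0 → δ ≤ X.rank) →
        Module.finrank 𝔽 C ≤
          ∑ j ∈ Finset.univ.filter (fun j : Fin b => (j : ℕ) < b - (δ - 1)),
            (F.filter (fun p => p.2 = j)).card) := by
  classical
  set k := b - (δ - 1) with hk
  -- The dots of `F` in the first `k` columns.
  let S : Finset (Fin a × Fin b) := F.filter (fun p => (p.2 : ℕ) < k)
  have hS : ∑ j ∈ Finset.univ.filter (fun j : Fin b => (j : ℕ) < k),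
      (F.filter (fun p => p.2 = j)).card = S.card := by
    rw [Finset.card_eq_sum_card_fiberwise (f := Prod.snd) (s := S)
      (t := Finset.univ.filter (fun j : Fin b => (j : ℕ) < k))]
    · refine Finset.sum_congr rfl fun j hj => ?_
      congr 1
      ext p
      simp only [S, Finset.mem_filter, Finset.mem_univ, true_and] at hj ⊢
      grind
    · intro p hp
      simp only [S, Finset.coe_filter, Set.mem_ofPred_eq, Finset.mem_univ, true_and] at hp ⊢
      exact hp.2
  rw [hS]
  let P : Matrix (Fin a) (Fin b) 𝔽 →ₗ[𝔽] (S → 𝔽) :=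
    { toFun := fun X s => X s.1.1 s.1.2
      map_add' := fun _ _ => rfl
      map_smul' := fun _ _ => rfl }
  have upper : ∀ C : Submodule 𝔽 (Matrix (Fin a) (Fin b) 𝔽),
      (∀ X ∈ C, ∀ p : Fin a × Fin b, p ∉ F → X p.1 p.2 = 0) →
      (∀ X ∈ C, X ≠ 0 → δ ≤ X.rank) → finrank 𝔽 C ≤ S.card := by
    intro C hsupp hrank
    have hinj : Function.Injective (P ∘ₗ C.subtype) := by
      rw [← LinearMap.ker_eq_bot, LinearMap.ker_eq_bot']
      rintro ⟨X, hX⟩ hPX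
      by_contra hne
      have h1 := hrank X hX fun h => hne (Subtype.ext h)
      have h2 : X.rank ≤ b - k := rank_le_of_cols_eq_zero X fun i j hj => by
        by_cases hF : (i, j) ∈ F
        · exact congrFun hPX ⟨(i, j), Finset.mem_filter.2 ⟨hF, hj⟩⟩
        · exact hsupp X hX (i, j) hF
      omega
    simpa using LinearMap.finrank_le_finrank_of_injective hinj
  refine ⟨?_, upper⟩
  rcases Nat.eq_zero_or_pos k with hk0 | hkpos
  · refine ⟨⊥, ?_, ?_, ?_⟩
    · rintro X hX p -
      rw [(Submodule.mem_bot 𝔽).1 hX]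
      rfl
    · exact fun X hX hne => absurd ((Submodule.mem_bot 𝔽).1 hX) hne
    · simp [S, hk0]
  · obtain ⟨D, hDrank, hDsys⟩ :=
      exists_systematic_mrd_code 𝔽 hab hkpos (show k ≤ b by omega)
    let supp : Submodule 𝔽 (Matrix (Fin a) (Fin b) 𝔽) :=
      { carrier := {X | ∀ p : Fin a × Fin b, p ∉ F → X p.1 p.2 = 0}
        add_mem' := fun {X Y} hX hY p hp => by
          rw [Matrix.add_apply, hX p hp, hY p hp, add_zero]
        zero_mem' := fun _ _ => rfl
        smul_mem' := fun c X hX p hp => by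
          rw [Matrix.smul_apply, hX p hp, smul_zero] }
    have hCsupp : ∀ X ∈ D ⊓ supp, ∀ p : Fin a × Fin b, p ∉ F → X p.1 p.2 = 0 :=
      fun X hX => hX.2
    have hCrank : ∀ X ∈ D ⊓ supp, X ≠ 0 → δ ≤ X.rank := fun X hX hne => by
      have := hDrank X hX.1 hne
      omega
    refine ⟨D ⊓ supp, hCsupp, hCrank, le_antisymm (upper _ hCsupp hCrank) ?_⟩
    have hsurj : Function.Surjective (P ∘ₗ (D ⊓ supp).subtype) := by
      intro y
      obtain ⟨X, hXD, hX⟩ := hDsys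
        (Matrix.of fun i j => if h : (i, j) ∈ S then y ⟨(i, j), h⟩ else 0)
      have hXsupp : X ∈ supp := by
        intro p hp
        have hlt : (p.2 : ℕ) < k := by
          by_contra hge
          exact hp (hfull p.2 (not_lt.1 hge) p.1)
        rw [hX p.1 p.2 hlt, Matrix.of_apply, dif_neg]
        exact fun h => hp (Finset.mem_filter.1 h).1
      refine ⟨⟨X, hXD, hXsupp⟩, ?_⟩
      ext s
      have hs := (Finset.mem_filter.1 s.2).2
      change X s.1.1 s.1.2 = y s
      rw [hX _ _ hs, Matrix.of_apply, dif_pos s.2]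
    simpa using LinearMap.finrank_le_finrank_of_surjective hsurj
end

section
/- Let 𝔽_q be a finite field with q elements, let a ≤ b, let δ ≥ 1, and let F be a Ferrers diagram inside an a×b grid such that each of the first δ−1 rows of F contains b dots (i.e., is full). Then the maximal dimension of an 𝔽_q-linear Ferrers diagram code for F with minimum rank distance δ equals the number of dots of F not contained in the first δ−1 rows, i.e., Σ_{i=δ}^{a} γ̂_i where γ̂_i is the number of dots in the i-th row of F (counted from the top); that is, there exists an 𝔽_q-linear subspace C of a×b matrices supported inside F with rank(X) ≥ δ for every nonzero X ∈ C and dim C = Σ_{i=δ}^{a} γ̂_i, and every such linear code has dimension at most this value. -/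
/-!
A matrix whose rows of index `≥ δ - 1` all vanish has rank at most `δ - 1`. Hence in a code of
minimum rank distance `δ` a codeword is determined by its entries in those rows, and for a code
supported in `F` only the positions of `F` count: this is the upper bound
(`ferrers_code_finrank_le`).

For existence, take a Gabidulin code (`exists_gabidulin`): with `k = a - (δ - 1)`, `L` the extension
of `𝔽` of degree `b` and `α_0, …, α_{a-1} ∈ L` linearly independent over `𝔽`, evaluate the
linearized polynomials `∑_{i<k} c_i x^{q^i}` at the `α_r` and write the values in coordinates as the
rows of an `a × b` matrix. Nonzero words have rank at least `a - (k - 1) = δ`, since such a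
polynomial has at most `q^(k-1)` roots. By the same remark as above, restriction to the last `k`
rows is injective on this code, whose dimension is `k * b`, so it is a bijection onto all possible
values of these rows: the code is systematic there. The codewords whose last `k` rows are supported
in `F` therefore form a code of the required dimension (`exists_ferrers_code`); they are supported
in `F` since the other rows of `F` are full.
-/

open Polynomial in
/-- A nonzero linearized polynomial `∑_{i<k} c_i x^{q^i}` has at most `q^(k-1)` roots, because its
degree is at most `q^(k-1)`. For `k = 0` there is no nonzero `c`, so the truncated subtraction is
harmless. -/
theorem linearized_card_zeros {L : Type*} [Field L] [Fintype L] (q k : ℕ) (hq : 2 ≤ q) (c : Fin k → L)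
    (hc : c ≠ 0) : Nat.card {x : L // ∑ i, c i * x ^ q ^ (i : ℕ) = 0} ≤ q ^ (k - 1) := by
  classical
  set P : L[X] := ∑ i : Fin k, C (c i) * X ^ q ^ (i : ℕ) with hP
  have hP0 : P ≠ 0 := by
    intro h
    apply hc
    funext i
    have h1 : P.coeff (q ^ (i : ℕ)) = c i := by
      rw [hP, finsetSum_coeff, Finset.sum_eq_single i]
      · simp
      · intro j _ hj
        rw [coeff_C_mul_X_pow, if_neg]
        intro h
        exact hj (Fin.ext (Nat.pow_right_injective hq h).symm)
      · simp
    rw [← h1, h]; simp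
  have hdeg : P.natDegree ≤ q ^ (k - 1) := by
    refine natDegree_sum_le_of_forall_le _ _ fun i _ => (natDegree_C_mul_X_pow_le _ _).trans ?_
    exact Nat.pow_le_pow_right (by omega) (by have := i.2; omega)
  calc Nat.card {x : L // ∑ i, c i * x ^ q ^ (i : ℕ) = 0}
      ≤ Nat.card P.roots.toFinset := by
        refine Nat.card_le_card_of_injective (fun x => ⟨x.1, ?_⟩) ?_
        · have := x.2
          rw [Multiset.mem_toFinset, mem_roots hP0, IsRoot.def, hP]
          simpa [eval_finsetSum] using this
        · intro x y h
          simpa [Subtype.ext_iff] using h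
    _ = P.roots.toFinset.card := by rw [Nat.card_eq_fintype_card, Fintype.card_coe]
    _ ≤ P.roots.card := Multiset.toFinset_card_le _
    _ ≤ P.natDegree := P.card_roots'
    _ ≤ _ := hdeg

/-- Gabidulin's construction of maximum rank distance codes, given as the image of a linear map `Φ`
from a space of dimension `k * b`. The bound says that the rank is at least
`a - k + 1`; for `k = 0` it is vacuous. -/
theorem exists_gabidulin (𝔽 : Type*) [Field 𝔽] [Fintype 𝔽] (a b k : ℕ) (hab : a ≤ b) (hb : b ≠ 0) :
    ∃ (V : Type) (_ : AddCommGroup V) (_ : Module 𝔽 V) (_ : Module.Finite 𝔽 V)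
      (Φ : V →ₗ[𝔽] Matrix (Fin a) (Fin b) 𝔽), Module.finrank 𝔽 V = k * b ∧
      ∀ v ≠ 0, a ≤ (Φ v).rank + (k - 1) := by
  classical
  obtain ⟨p, hp⟩ := CharP.exists 𝔽
  have : Fact p.Prime := ⟨CharP.char_is_prime 𝔽 p⟩
  have : NeZero b := ⟨hb⟩
  let L := FiniteField.Extension 𝔽 p b
  have : Fintype L := Fintype.ofFinite L
  have hL : Module.finrank 𝔽 L = b := FiniteField.finrank_extension 𝔽 p b
  let B : Module.Basis (Fin b) 𝔽 L := Module.finBasisOfFinrankEq 𝔽 L hL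
  let α : Fin a → L := fun r => B (Fin.castLE hab r)
  have hα : LinearIndependent 𝔽 α := B.linearIndependent.comp _ (Fin.castLE_injective hab)
  let q := Fintype.card 𝔽
  let φ : ℕ → L →ₗ[𝔽] L := fun i => ((FiniteField.frobeniusAlgHom 𝔽 L) ^ i).toLinearMap
  have hφ : ∀ i x, φ i x = x ^ q ^ i := by
    intro i x
    simp [φ, q, AlgHom.coe_pow, FiniteField.coe_frobeniusAlgHom, pow_iterate]
  let Φ : (Fin k → L) →ₗ[𝔽] Matrix (Fin a) (Fin b) 𝔽 :=
    { toFun := fun c => Matrix.of fun r j => B.repr (∑ i, c i * α r ^ q ^ (i : ℕ)) j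
      map_add' := by
        intro c d; ext r j
        simp [add_mul, Finset.sum_add_distrib]
      map_smul' := by
        intro s c; ext r j
        simp [Finset.mul_sum] }
  refine ⟨Fin k → L, inferInstance, inferInstance, inferInstance, Φ, by simp [Module.finrank_pi_fintype, hL], ?_⟩
  intro c hc
  -- By rank-nullity for `(Φ c)ᵀ`, it is enough to bound its kernel, which `v ↦ ∑ v_r α_r` embeds into
  -- the set of roots of the linearized polynomial attached to `c`.
  rw [← Matrix.rank_transpose]
  have hrn := (Φ c).transpose.mulVecLin.finrank_range_add_finrank_ker
  rw [Module.finrank_fin_fun] at hrn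
  change (Φ c).transpose.rank + _ = _ at hrn
  suffices Module.finrank 𝔽 (LinearMap.ker (Φ c).transpose.mulVecLin) ≤ k - 1 by omega
  have hq : 2 ≤ q := Fintype.one_lt_card
  rw [← Nat.pow_le_pow_iff_right (a := q) hq]
  have hcard : Nat.card (LinearMap.ker (Φ c).transpose.mulVecLin) = q ^ Module.finrank 𝔽 (LinearMap.ker (Φ c).transpose.mulVecLin) := by
    rw [Module.natCard_eq_pow_finrank (K := 𝔽), Nat.card_eq_fintype_card]
  rw [← hcard]
  refine le_trans ?_ (linearized_card_zeros q k hq c hc)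
  refine Nat.card_le_card_of_injective
    (fun v => ⟨∑ r, v.1 r • α r, ?_⟩) ?_
  · have hv : (Φ c).transpose.mulVec v.1 = 0 := v.2
    have h1 : ∑ r, v.1 r • ∑ i : Fin k, c i * α r ^ q ^ (i : ℕ) = 0 := by
      apply B.repr.injective
      ext j
      have := congrFun hv j
      simpa [Φ, Matrix.mulVec, dotProduct, mul_comm, Finsupp.finsetSum_apply] using this
    have hpow : ∀ i, (∑ r, v.1 r • α r) ^ q ^ i = ∑ r, v.1 r • α r ^ q ^ i := by
      intro i
      rw [← hφ, map_sum]
      exact Finset.sum_congr rfl fun r _ => by rw [map_smul, hφ]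
    simp_rw [hpow]
    rw [← h1]
    simp only [Finset.smul_sum]
    rw [Finset.sum_comm]
    refine Finset.sum_congr rfl fun i _ => ?_
    rw [Finset.mul_sum]
    exact Finset.sum_congr rfl fun r _ => mul_smul_comm _ _ _
  · intro v w h
    have h' : ∑ r, v.1 r • α r = ∑ r, w.1 r • α r := by simpa using h
    apply Subtype.ext
    exact linearIndependent_iff_injective_fintypeLinearCombination.1 hα (by simpa [Fintype.linearCombination_apply] using h')

theorem rank_le_of_rows_eq_zero {𝔽 : Type*} [Field 𝔽] {a b d : ℕ} (X : Matrix (Fin a) (Fin b) 𝔽)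
    (hX : ∀ (i : Fin a) j, d ≤ (i : ℕ) → X i j = 0) : X.rank ≤ d := by
  refine (X.rank_le_card_of_support_subset
    (Finset.univ.filter fun i : Fin a => (i : ℕ) < d) ?_).trans ?_
  · rw [Function.support_subset_iff']
    intro i hi
    ext j
    exact hX i j (by simpa using hi)
  · rw [Fin.card_filter_val_lt]
    exact min_le_right a d

/-- Restriction of a matrix to the entries at a set `S` of positions. -/
def entries (𝔽 : Type*) [Field 𝔽] {a b : ℕ} (S : Set (Fin a × Fin b)) :
    Matrix (Fin a) (Fin b) 𝔽 →ₗ[𝔽] (S → 𝔽) where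
  toFun X p := X p.1.1 p.1.2
  map_add' _ _ := rfl
  map_smul' _ _ := rfl

theorem sum_rows_card {a b d : ℕ} (F : Finset (Fin a × Fin b)) :
    ∑ i ∈ Finset.univ.filter (fun i : Fin a => d ≤ (i : ℕ)),
      (F.filter (fun p => p.1 = i)).card = Nat.card {p | p ∈ F ∧ d ≤ (p.1 : ℕ)} := by
  classical
  have h : {p | p ∈ F ∧ d ≤ (p.1 : ℕ)} = ((F.filter fun p => d ≤ (p.1 : ℕ)) : Set _) := by
    ext; simp
  rw [h, Nat.card_coe_set_eq, Set.ncard_coe_finset,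
    Finset.card_eq_sum_card_fiberwise (f := Prod.fst)
      (t := Finset.univ.filter (fun i : Fin a => d ≤ (i : ℕ)))]
  · refine Finset.sum_congr rfl fun i hi => ?_
    congr 1
    ext p
    simp only [Finset.mem_filter, Finset.mem_univ, true_and] at hi ⊢
    grind
  · intro p hp
    simpa using (Finset.mem_filter.1 hp).2

theorem card_bottom_rows (a b d : ℕ) :
    Nat.card {p : Fin a × Fin b | d ≤ (p.1 : ℕ)} = (a - d) * b := by
  have h : {p : Fin a × Fin b | d ≤ (p.1 : ℕ)} =
    ((Finset.univ.filter fun i : Fin a => d ≤ (i : ℕ)) ×ˢ (Finset.univ : Finset (Fin b)) :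
      Finset _) := by
    ext; simp
  rw [h, Nat.card_coe_set_eq, Set.ncard_coe_finset, Finset.card_product, Finset.card_univ,
    Fintype.card_fin]
  congr 1
  have := Finset.card_filter_add_card_filter_not (s := (Finset.univ : Finset (Fin a))) (fun i : Fin a => (i : ℕ) < d)
  have h2 := Fin.card_filter_val_lt (n := a) (m := d)
  simp only [not_lt, Finset.card_univ, Fintype.card_fin] at this
  omega

theorem ferrers_code_finrank_le {𝔽 : Type*} [Field 𝔽] {a b δ : ℕ} (hδ : 1 ≤ δ)
    (F : Finset (Fin a × Fin b)) (C : Submodule 𝔽 (Matrix (Fin a) (Fin b) 𝔽))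
    (hF : ∀ X ∈ C, ∀ p : Fin a × Fin b, p ∉ F → X p.1 p.2 = 0)
    (hC : ∀ X ∈ C, X ≠ 0 → δ ≤ X.rank) :
    Module.finrank 𝔽 C ≤ Nat.card {p | p ∈ F ∧ δ - 1 ≤ (p.1 : ℕ)} := by
  classical
  have hinj : Function.Injective
      ((entries 𝔽 {p | p ∈ F ∧ δ - 1 ≤ (p.1 : ℕ)}).comp C.subtype) := by
    rw [← LinearMap.ker_eq_bot, LinearMap.ker_eq_bot']
    intro X hX
    by_contra hne
    have h1 := hC X X.2 (by simpa using hne)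
    have h2 := rank_le_of_rows_eq_zero (d := δ - 1) X.1 fun (i : Fin a) j hi => by
      by_cases hp : (i, j) ∈ F
      · exact congrFun hX ⟨(i, j), hp, hi⟩
      · exact hF X X.2 (i, j) hp
    omega
  have := LinearMap.finrank_le_finrank_of_injective hinj
  rwa [Module.finrank_fintype_fun_eq_card, ← Nat.card_eq_fintype_card] at this

/-- Existence of the optimal code. The case `δ > a`, where only the zero code qualifies, is excluded
here because it allows `b = 0`, and there is no field extension of degree `0`. -/
theorem exists_ferrers_code (𝔽 : Type*) [Field 𝔽] [Fintype 𝔽]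
    (a b δ : ℕ) (hab : a ≤ b) (hδ : 1 ≤ δ) (hδa : δ ≤ a) (F : Finset (Fin a × Fin b))
    (hfull : ∀ i : Fin a, (i : ℕ) < δ - 1 → ∀ j : Fin b, (i, j) ∈ F) :
    ∃ C : Submodule 𝔽 (Matrix (Fin a) (Fin b) 𝔽),
      (∀ X ∈ C, ∀ p : Fin a × Fin b, p ∉ F → X p.1 p.2 = 0) ∧
      (∀ X ∈ C, X ≠ 0 → δ ≤ X.rank) ∧
      Module.finrank 𝔽 C = Nat.card {p | p ∈ F ∧ δ - 1 ≤ (p.1 : ℕ)} := by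
  classical
  obtain ⟨V, _, _, _, Φ, hV, hΦ⟩ := exists_gabidulin 𝔽 a b (a - (δ - 1)) hab (by omega)
  have hrank : ∀ v ≠ 0, δ ≤ (Φ v).rank := fun v hv => by
    have := hΦ v hv
    omega
  have hinj : Function.Injective ((entries 𝔽 {p : Fin a × Fin b | δ - 1 ≤ (p.1 : ℕ)}).comp Φ) := by
    rw [← LinearMap.ker_eq_bot, LinearMap.ker_eq_bot']
    intro v hv
    by_contra hne
    have h1 := hrank v hne
    have h2 := rank_le_of_rows_eq_zero (d := δ - 1) (Φ v) fun (i : Fin a) j hi => congrFun hv ⟨(i, j), hi⟩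
    omega
  -- The restriction to the last rows is injective between spaces of equal dimension.
  have hdim : Module.finrank 𝔽 V =
      Module.finrank 𝔽 ({p : Fin a × Fin b | δ - 1 ≤ (p.1 : ℕ)} → 𝔽) := by
    rw [hV, Module.finrank_fintype_fun_eq_card, ← Nat.card_eq_fintype_card, card_bottom_rows]
  let e := LinearMap.linearEquivOfInjective _ hinj hdim
  have he : ∀ y (p : {p : Fin a × Fin b | δ - 1 ≤ (p.1 : ℕ)}),
      Φ (e.symm y) p.1.1 p.1.2 = y p := fun y p => congrFun (e.apply_symm_apply y) p
  -- The code: extend arbitrary values on `F` in the last rows by zero, then complete to a codeword.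
  let s : {p | p ∈ F ∧ δ - 1 ≤ (p.1 : ℕ)} → {p : Fin a × Fin b | δ - 1 ≤ (p.1 : ℕ)} :=
    fun p => ⟨p.1, p.2.2⟩
  have hs : Function.Injective s := fun p p' h => Subtype.ext (congrArg (fun x => x.1) h)
  let Ψ := Φ.comp (e.symm.toLinearMap.comp (Function.ExtendByZero.linearMap 𝔽 s))
  have hΨ : Function.Injective Ψ := by
    have h1 : Function.Injective Φ := fun v w h => hinj (congrArg (entries 𝔽 _) h)
    exact h1.comp (e.symm.injective.comp (Function.extend_injective hs _))
  refine ⟨LinearMap.range Ψ, ?_, ?_, ?_⟩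
  · rintro _ ⟨x, rfl⟩ p hp
    by_cases hpd : δ - 1 ≤ (p.1 : ℕ)
    · refine (he _ ⟨p, hpd⟩).trans (Function.extend_apply' _ _ _ ?_)
      rintro ⟨p', hp'⟩
      have h : p'.1 = p := congrArg (fun x => x.1) hp'
      exact hp (h ▸ p'.2.1)
    · exact absurd (hfull p.1 (by omega) p.2) hp
  · rintro _ ⟨x, rfl⟩ hx
    refine hrank _ fun h => hx ?_
    exact (congrArg Φ h).trans (map_zero Φ)
  · rw [LinearMap.finrank_range_of_inj hΨ, Module.finrank_fintype_fun_eq_card,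
      ← Nat.card_eq_fintype_card]



/-- Let `a ≤ b`, `δ ≥ 1`, and let `F` be a Ferrers diagram in an `a × b` grid
whose first `δ − 1` rows are full. Then the maximal dimension of an `𝔽_q`-linear Ferrers
diagram code for `F` with minimum rank distance `δ` equals the number of dots of `F` not in
the first `δ − 1` rows, i.e. `Σ_{i=δ}^{a} γ̂_i` with `γ̂_i` the number of dots in the
`i`-th row of `F`. -/
theorem ferrers_code_dim_full_top_rows
    (𝔽 : Type*) [Field 𝔽] [Fintype 𝔽]
    (a b δ : ℕ) (hab : a ≤ b) (hδ : 1 ≤ δ)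
    (F : Finset (Fin a × Fin b))
    (hFright : ∀ i : Fin a, ∀ j j' : Fin b, (i, j) ∈ F → j ≤ j' → (i, j') ∈ F)
    (hFup : ∀ i i' : Fin a, ∀ j : Fin b, (i, j) ∈ F → i' ≤ i → (i', j) ∈ F)
    (hfull : ∀ i : Fin a, (i : ℕ) < δ - 1 → ∀ j : Fin b, (i, j) ∈ F) :
    (∃ C : Submodule 𝔽 (Matrix (Fin a) (Fin b) 𝔽),
        (∀ X ∈ C, ∀ p : Fin a × Fin b, p ∉ F → X p.1 p.2 = 0) ∧
        (∀ X ∈ C, X ≠ 0 → δ ≤ X.rank) ∧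
        Module.finrank 𝔽 C =
          ∑ i ∈ Finset.univ.filter (fun i : Fin a => δ - 1 ≤ (i : ℕ)),
            (F.filter (fun p => p.1 = i)).card) ∧
    (∀ C : Submodule 𝔽 (Matrix (Fin a) (Fin b) 𝔽),
        (∀ X ∈ C, ∀ p : Fin a × Fin b, p ∉ F → X p.1 p.2 = 0) →
        (∀ X ∈ C, X ≠ 0 → δ ≤ X.rank) →
        Module.finrank 𝔽 C ≤
          ∑ i ∈ Finset.univ.filter (fun i : Fin a => δ - 1 ≤ (i : ℕ)),
            (F.filter (fun p => p.1 = i)).card) := by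
  rw [sum_rows_card]
  refine ⟨?_, fun C hF hC => ferrers_code_finrank_le hδ F C hF hC⟩
  rcases le_or_gt δ a with hδa | hδa
  · exact exists_ferrers_code 𝔽 a b δ hab hδ hδa F hfull
  · have : IsEmpty {p : Fin a × Fin b | p ∈ F ∧ δ - 1 ≤ (p.1 : ℕ)} :=
      ⟨fun p => by have := p.2.2; have := p.1.1.2; omega⟩
    refine ⟨⊥, ?_, ?_, ?_⟩
    · rintro X hX p -
      rw [(Submodule.mem_bot 𝔽).1 hX]; rfl
    · intro X hX h0
      exact absurd ((Submodule.mem_bot 𝔽).1 hX) h0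
    · rw [finrank_bot, Nat.card_of_isEmpty]
end

section
/- Let 𝔽 be a field, δ ≥ 1, and let U and V be k×n matrices over 𝔽 in reduced row echelon form with strictly increasing pivot maps p, q : {0,…,k−1} → {0,…,n−1} respectively, such that p(0) = q(0) (the first 1 of the identifying vectors is in the same position) and the Hamming distance of the identifying vectors is d_H(v(U), v(V)) = 2δ − 2. Suppose moreover that there exists a column index j with U_{0,j} ≠ V_{0,j} and j < p(i) and j < q(i) for all i ≥ 1 (the entries at the pending positions of the first row are fixed to different tuples μ ≠ ν, and these positions lie to the left of all other pivots). Then rank([U; V]) ≥ k + δ, where [U; V] denotes the 2k×n matrix obtained by stacking U on top of V. -/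
/-!
A subspace of `Fin n → 𝔽` has dimension at least the number of distinct leading positions
of its vectors (`card_le_rank_of_leading`). The rows of `U` and `V` have leading positions
`im p ∪ im q`, a set of size `k + (δ - 1)` because two `k`-sets at Hamming distance
`2δ - 2` have a union of that size (`card_union_of_card_symmDiff`). One more leading position
comes from the difference of the two first rows: it vanishes at the common first
pivot, where both rows are `1`, and is nonzero at the pending position `j`, so it leads at or
before `j` but not at the first pivot, hence at no pivot of `U` or `V`.
-/

/-- The dimension of the row space is at least the number of leading positions of its vectors:
vectors leading at distinct columns of `S`, restricted to the columns in `S`, form a triangular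
matrix with nonzero diagonal. -/
theorem card_le_rank_of_leading {𝔽 ι : Type*} [Field 𝔽] [Finite ι] {n : ℕ}
    (A : Matrix ι (Fin n) 𝔽) (S : Finset (Fin n))
    (h : ∀ s ∈ S, ∃ w ∈ Submodule.span 𝔽 (Set.range A.row),
      w s ≠ 0 ∧ ∀ c < s, w c = 0) : S.card ≤ A.rank := by
  choose! w hw hne hzero using h
  let M : Matrix S S 𝔽 := Matrix.of fun s t => w s t
  have hM : M.BlockTriangular id := fun s t hts => hzero s s.2 t hts
  have hdet : M.det ≠ 0 := by
    rw [Matrix.det_of_upperTriangular hM, Finset.prod_ne_zero_iff]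
    exact fun s _ => hne s s.2
  have hli : LinearIndependent 𝔽 M.row := Matrix.linearIndependent_rows_of_det_ne_zero hdet
  let v : S → Submodule.span 𝔽 (Set.range A.row) := fun s => ⟨w s, hw s s.2⟩
  have hv : LinearIndependent 𝔽 v :=
    LinearIndependent.of_comp
      ((LinearMap.funLeft 𝔽 𝔽 (Subtype.val : S → Fin n)).comp (Submodule.subtype _)) hli
  rw [Matrix.rank_eq_finrank_span_row]
  simpa using hv.fintype_card_le_finrank

theorem card_union_of_card_symmDiff {α : Type*} [DecidableEq α] {P Q : Finset α} {k d : ℕ}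
    (hP : P.card = k) (hQ : Q.card = k) (h : (symmDiff P Q).card = 2 * d) :
    (P ∪ Q).card = k + d := by
  have h1 : (symmDiff P Q).card = (P \ Q).card + (Q \ P).card := by
    rw [symmDiff_def, Finset.sup_eq_union, Finset.card_union_of_disjoint disjoint_sdiff_sdiff]
  have h2 := Finset.card_sdiff_add_card P Q
  have h3 := Finset.card_sdiff_add_card Q P
  rw [Finset.union_comm Q P] at h3
  omega

/-- Let `U`, `V` be k×n matrices in reduced row echelon form with pivot maps
`p`, `q` having the same first pivot, whose identifying vectors have Hamming distance
`2δ − 2`, and suppose the first rows of `U` and `V` differ in a (pending) position `j`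
lying strictly to the left of all other pivots of both matrices. Then
`rank [U; V] ≥ k + δ`. -/
theorem pending_dots_rank_bound
    (𝔽 : Type*) [Field 𝔽] (n k δ : ℕ) (hδ : 1 ≤ δ) (hk : 0 < k)
    (U V : Matrix (Fin k) (Fin n) 𝔽)
    (p q : Fin k → Fin n) (hp : StrictMono p) (hq : StrictMono q)
    (hUpiv : ∀ i j : Fin k, U i (p j) = if i = j then 1 else 0)
    (hVpiv : ∀ i j : Fin k, V i (q j) = if i = j then 1 else 0)
    (hUech : ∀ (i : Fin k) (c : Fin n), (c : ℕ) < (p i : ℕ) → U i c = 0)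
    (hVech : ∀ (i : Fin k) (c : Fin n), (c : ℕ) < (q i : ℕ) → V i c = 0)
    (hfirst : p ⟨0, hk⟩ = q ⟨0, hk⟩)
    (hham : (symmDiff (Finset.image p Finset.univ) (Finset.image q Finset.univ)).card
              = 2 * δ - 2)
    (hpending : ∃ j : Fin n, U ⟨0, hk⟩ j ≠ V ⟨0, hk⟩ j ∧
      ∀ i : Fin k, 0 < (i : ℕ) → (j : ℕ) < (p i : ℕ) ∧ (j : ℕ) < (q i : ℕ)) :
    k + δ ≤ (Matrix.fromRows U V).rank := by
  classical
  obtain ⟨j, hj, hjlt⟩ := hpending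
  let z : Fin k := ⟨0, hk⟩
  -- The leading position of the difference of the first rows.
  obtain ⟨c, hc, hcmin⟩ : ∃ c, U z c ≠ V z c ∧ ∀ b < c, U z b = V z b := by
    have hex : ∃ c, U z c ≠ V z c := ⟨j, hj⟩
    refine ⟨Fin.find _ hex, Fin.find_spec hex, fun b hb => ?_⟩
    exact not_not.1 (Fin.find_min hex hb)
  have hcj : c ≤ j := not_lt.1 fun hlt => hj (hcmin j hlt)
  have hcz : c ≠ p z := by
    rintro rfl
    have hV : V z (p z) = 1 := by
      have hpq : p z = q z := hfirst
      rw [hpq, hVpiv, if_pos rfl]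
    exact hc (by rw [hUpiv, if_pos rfl, hV])
  have hcp : ∀ i, p i ≠ c := by
    rintro i rfl
    rcases Nat.eq_zero_or_pos i with h0 | h0
    · exact hcz (congrArg p (Fin.ext h0))
    · exact absurd (hjlt i h0).1 (not_lt.2 hcj)
  have hcq : ∀ i, q i ≠ c := by
    rintro i rfl
    rcases Nat.eq_zero_or_pos i with h0 | h0
    · exact hcz ((congrArg q (Fin.ext h0)).trans hfirst.symm)
    · exact absurd (hjlt i h0).2 (not_lt.2 hcj)
  have hcard := card_union_of_card_symmDiff (k := k) (d := δ - 1)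
    (by rw [Finset.card_image_of_injective _ hp.injective, Finset.card_fin])
    (by rw [Finset.card_image_of_injective _ hq.injective, Finset.card_fin])
    (hham.trans (by omega))
  have hcmem : c ∉ Finset.image p Finset.univ ∪ Finset.image q Finset.univ := by
    simp [hcp, hcq]
  have hUmem : ∀ i, U i ∈ Submodule.span 𝔽 (Set.range (Matrix.fromRows U V).row) :=
    fun i => Submodule.subset_span ⟨Sum.inl i, rfl⟩
  have hVmem : ∀ i, V i ∈ Submodule.span 𝔽 (Set.range (Matrix.fromRows U V).row) :=
    fun i => Submodule.subset_span ⟨Sum.inr i, rfl⟩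
  have hrank := card_le_rank_of_leading (Matrix.fromRows U V)
    (insert c (Finset.image p Finset.univ ∪ Finset.image q Finset.univ)) (by
      intro s hs
      simp only [Finset.mem_insert, Finset.mem_union, Finset.mem_image, Finset.mem_univ,
        true_and] at hs
      rcases hs with rfl | ⟨i, rfl⟩ | ⟨i, rfl⟩
      · exact ⟨U z - V z, sub_mem (hUmem z) (hVmem z), sub_ne_zero.2 hc,
          fun b hb => sub_eq_zero.2 (hcmin b hb)⟩
      · exact ⟨U i, hUmem i, by simp [hUpiv], fun b hb => hUech i b hb⟩
      · exact ⟨V i, hVmem i, by simp [hVpiv], fun b hb => hVech i b hb⟩)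
  rw [Finset.card_insert_of_notMem hcmem, hcard] at hrank
  omega
end

section
/- Let 𝔽 be a field, δ ≥ 1, and let U and V be k×n matrices over 𝔽 in reduced row echelon form with strictly increasing pivot maps p, q : {0,…,k−1} → {0,…,n−1} respectively, such that p(0) = q(0), the Hamming distance of the identifying vectors is d_H(v(U), v(V)) = 2δ − 2, and there exists a column index j with U_{0,j} ≠ V_{0,j} and j < p(i) and j < q(i) for all i ≥ 1. Then the subspace distance between the row spaces satisfies d_S(rowspace U, rowspace V) = 2(k − dim(rowspace U ∩ rowspace V)) ≥ 2δ. -/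
/-!
A vector `w` of the row space of a matrix in reduced row echelon form is recovered from its
entries at the pivots, `w = ∑ i, w (p i) • U i`, so a nonzero `w` has its first nonzero entry at
a pivot (`rref_leading_mem`). Hence a nonzero vector of the intersection of the two row spaces
has its first nonzero entry at a common pivot. That entry is not at the shared first pivot `p 0`:
at the pending column `j` only the first rows contribute, so `w (p 0) * U 0 j = w j =
w (p 0) * V 0 j`, which forces `w (p 0) = 0`. Restriction of coordinates to the common pivots
other than `p 0` is therefore injective on the intersection, whose dimension is at most the number
of those pivots (`finrank_le_card_of_detect`). There are `k - (δ - 1)` common pivots, hence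
`k - δ` besides `p 0`.
-/

/-- The coordinates of a row-space vector in the rows are its entries at the pivots. -/
lemma rref_apply {𝔽 : Type*} [Field 𝔽] {n k : ℕ} {U : Matrix (Fin k) (Fin n) 𝔽}
    {p : Fin k → Fin n} (hpiv : ∀ i j : Fin k, U i (p j) = if i = j then 1 else 0)
    {w : Fin n → 𝔽} (hw : w ∈ Submodule.span 𝔽 (Set.range U)) (c : Fin n) :
    w c = ∑ i, w (p i) * U i c := by
  obtain ⟨a, rfl⟩ := (Submodule.mem_span_range_iff_exists_fun 𝔽).1 hw
  have h : ∀ c, (∑ i, a i • U i) c = ∑ i, a i * U i c := fun c => by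
    simp [Finset.sum_apply]
  simp only [h]
  simp [hpiv]

/-- The first nonzero entry of a row-space vector sits at a pivot. -/
lemma rref_leading_mem {𝔽 : Type*} [Field 𝔽] {n k : ℕ} {U : Matrix (Fin k) (Fin n) 𝔽}
    {p : Fin k → Fin n} (hpiv : ∀ i j : Fin k, U i (p j) = if i = j then 1 else 0)
    (hech : ∀ (i : Fin k) (c : Fin n), (c : ℕ) < (p i : ℕ) → U i c = 0)
    {w : Fin n → 𝔽} (hw : w ∈ Submodule.span 𝔽 (Set.range U)) {l : Fin n} (hl : w l ≠ 0)
    (hmin : ∀ c < l, w c = 0) : l ∈ Finset.image p Finset.univ := by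
  by_contra hmem
  apply hl
  rw [rref_apply hpiv hw l]
  refine Finset.sum_eq_zero fun i _ => ?_
  rcases lt_trichotomy (p i) l with h | h | h
  · rw [hmin _ h, zero_mul]
  · exact absurd (Finset.mem_image.2 ⟨i, Finset.mem_univ i, h⟩) hmem
  · rw [hech i l h, mul_zero]

/-- At a column to the left of all pivots but the first, only the first row contributes. -/
lemma rref_apply_pending {𝔽 : Type*} [Field 𝔽] {n k : ℕ} (hk : 0 < k)
    {U : Matrix (Fin k) (Fin n) 𝔽}
    {p : Fin k → Fin n} (hpiv : ∀ i j : Fin k, U i (p j) = if i = j then 1 else 0)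
    (hech : ∀ (i : Fin k) (c : Fin n), (c : ℕ) < (p i : ℕ) → U i c = 0)
    {w : Fin n → 𝔽} (hw : w ∈ Submodule.span 𝔽 (Set.range U)) {j : Fin n}
    (hj : ∀ i : Fin k, 0 < (i : ℕ) → (j : ℕ) < (p i : ℕ)) :
    w j = w (p ⟨0, hk⟩) * U ⟨0, hk⟩ j := by
  rw [rref_apply hpiv hw j]
  refine Finset.sum_eq_single_of_mem _ (Finset.mem_univ _) fun i _ hi => ?_
  have hi0 : 0 < (i : ℕ) := Nat.pos_of_ne_zero fun h => hi (Fin.ext h)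
  rw [hech i j (hj i hi0), mul_zero]

/-- A subspace whose nonzero vectors are detected by the coordinates in `S` has dimension at
most `S.card`. -/
lemma finrank_le_card_of_detect {𝔽 ι : Type*} [Field 𝔽] (W : Submodule 𝔽 (ι → 𝔽))
    (S : Finset ι) (h : ∀ w ∈ W, (∀ c ∈ S, w c = 0) → w = 0) :
    Module.finrank 𝔽 W ≤ S.card := by
  let f : W →ₗ[𝔽] (S → 𝔽) := (LinearMap.funLeft 𝔽 𝔽 (fun c : S => (c : ι))).comp W.subtype
  have hf : Function.Injective f := by
    rw [← LinearMap.ker_eq_bot, LinearMap.ker_eq_bot']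
    intro w hw
    exact Subtype.ext (h w w.2 fun c hc => congrFun hw ⟨c, hc⟩)
  simpa using LinearMap.finrank_le_finrank_of_injective hf

/-- Under the same hypotheses as the pending-dot theorem (same first pivot,
Hamming distance of identifying vectors `2δ − 2`, first rows differing at a position to the
left of all other pivots), the subspace distance of the row spaces is at least `2δ`. -/
theorem pending_dots_subspace_distance_bound
    (𝔽 : Type*) [Field 𝔽] (n k δ : ℕ) (hδ : 1 ≤ δ) (hk : 0 < k)
    (U V : Matrix (Fin k) (Fin n) 𝔽)
    (p q : Fin k → Fin n) (hp : StrictMono p) (hq : StrictMono q)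
    (hUpiv : ∀ i j : Fin k, U i (p j) = if i = j then 1 else 0)
    (hVpiv : ∀ i j : Fin k, V i (q j) = if i = j then 1 else 0)
    (hUech : ∀ (i : Fin k) (c : Fin n), (c : ℕ) < (p i : ℕ) → U i c = 0)
    (hVech : ∀ (i : Fin k) (c : Fin n), (c : ℕ) < (q i : ℕ) → V i c = 0)
    (hfirst : p ⟨0, hk⟩ = q ⟨0, hk⟩)
    (hham : (symmDiff (Finset.image p Finset.univ) (Finset.image q Finset.univ)).card
              = 2 * δ - 2)
    (hpending : ∃ j : Fin n, U ⟨0, hk⟩ j ≠ V ⟨0, hk⟩ j ∧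
      ∀ i : Fin k, 0 < (i : ℕ) → (j : ℕ) < (p i : ℕ) ∧ (j : ℕ) < (q i : ℕ)) :
    2 * δ ≤ 2 * (k - Module.finrank 𝔽
      ((Submodule.span 𝔽 (Set.range U) ⊓ Submodule.span 𝔽 (Set.range V) :
        Submodule 𝔽 (Fin n → 𝔽)))) := by
  obtain ⟨j, hne, hj⟩ := hpending
  set P := Finset.image p Finset.univ with hP
  set Q := Finset.image q Finset.univ with hQ
  have hPc : P.card = k := by simp [hP, Finset.card_image_of_injective _ hp.injective]
  have hQc : Q.card = k := by simp [hQ, Finset.card_image_of_injective _ hq.injective]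
  have h0 : p ⟨0, hk⟩ ∈ P ∩ Q :=
    Finset.mem_inter.2 ⟨Finset.mem_image_of_mem p (Finset.mem_univ _),
      hfirst ▸ Finset.mem_image_of_mem q (Finset.mem_univ _)⟩
  have hdim := finrank_le_card_of_detect
    (Submodule.span 𝔽 (Set.range U) ⊓ Submodule.span 𝔽 (Set.range V))
    ((P ∩ Q).erase (p ⟨0, hk⟩)) (by
      rintro w ⟨hwU, hwV⟩ hS
      have hw0 : w (p ⟨0, hk⟩) = 0 := by
        by_contra hne0
        have e1 := rref_apply_pending hk hUpiv hUech hwU fun i hi => (hj i hi).1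
        have e2 := rref_apply_pending hk hVpiv hVech hwV fun i hi => (hj i hi).2
        rw [← hfirst, e1] at e2
        exact hne (mul_left_cancel₀ hne0 e2)
      by_contra hw
      obtain ⟨c, hc⟩ := Function.ne_iff.1 hw
      obtain ⟨l, hl, hmin⟩ := WellFounded.has_min (wellFounded_lt (α := Fin n))
        {c | w c ≠ 0} ⟨c, hc⟩
      have hmin' : ∀ c < l, w c = 0 := fun c hcl => by
        by_contra hwc
        exact hmin c hwc hcl
      refine hl (hS l (Finset.mem_erase.2 ⟨fun h => hl (h ▸ hw0), Finset.mem_inter.2 ⟨?_, ?_⟩⟩))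
      · exact rref_leading_mem hUpiv hUech hwU hl hmin'
      · exact rref_leading_mem hVpiv hVech hwV hl hmin')
  have hpos := Finset.card_erase_add_one h0
  have hsd : (symmDiff P Q).card = (P \ Q).card + (Q \ P).card :=
    Finset.card_union_of_disjoint disjoint_sdiff_sdiff
  have h1 := Finset.card_sdiff_add_card_inter P Q
  have h2 := Finset.card_sdiff_add_card_inter Q P
  rw [Finset.inter_comm Q P] at h2
  omega
end

section
/- Let 𝔽_q be a finite field with q elements. There exists a set C of 3-dimensional subspaces of 𝔽_q^6 with |C| = q^6 + q^2 + q such that the subspace distance between any two distinct elements of C is at least 4 (i.e., a [6, 4, q^6 + q^2 + q, 3] constant dimension code exists). -/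
/-!
Let `K` be the cubic extension of `𝔽 = 𝔽_q` and identify `𝔽^6` with `K × K`.

* The `q^6` graphs of the maps `x ↦ a x + b x^q`, `(a, b) ∈ K²`, form a lifted Gabidulin code. For
  `(a, b) ≠ 0` the polynomial `a X + b X^q` has at most `q` roots, so the kernel of the corresponding
  map has dimension at most one (`finrank_ker_gabidulinMap_le`). Hence two distinct graphs meet in
  dimension at most one.
* For each of the `q^2 + q + 1` lines `W` of `K`, a correlation of `K` gives a plane `W^⊥ ⊆ K`, and
  `W ↦ W^⊥` is injective. The space `W × W^⊥` is three-dimensional. A graph meets it in dimension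
  at most one, since the first projection is injective on the graph and maps the intersection into
  `W`. For `W ≠ W'`, the second projection is injective on `(W × W^⊥) ∩ (W' × W'^⊥)`, because
  `W ∩ W' = 0`, and it maps this intersection into the intersection of two distinct planes of `K`,
  which is at most a line.

This yields a code of `q^6 + q^2 + q + 1` subspaces, and any `q^6 + q^2 + q` of them suffice.
-/

open Module Polynomial
open scoped LinearAlgebra.Projectivization

namespace ConstantDimensionCode

section Gabidulin

variable (F K : Type*) [Field F] [Fintype F] [Field K] [Algebra F K]

/-- The `F`-linear map `x ↦ a x + b x ^ q` on `K`, where `q` is the cardinality of `F`. -/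
noncomputable def gabidulinMap (a b : K) : K →ₗ[F] K :=
  LinearMap.mulLeft F a + LinearMap.mulLeft F b ∘ₗ (FiniteField.frobeniusAlgHom F K).toLinearMap

variable {F K}

@[simp] lemma gabidulinMap_apply (a b x : K) :
    gabidulinMap F K a b x = a * x + b * x ^ Fintype.card F := by
  simp [gabidulinMap]

lemma gabidulinMap_sub (a b a' b' : K) :
    gabidulinMap F K a b - gabidulinMap F K a' b' = gabidulinMap F K (a - a') (b - b') := by
  ext x
  simp only [LinearMap.sub_apply, gabidulinMap_apply]
  ring

lemma finrank_ker_gabidulinMap_le [FiniteDimensional F K] {a b : K} (h : (a, b) ≠ 0) :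
    finrank F (LinearMap.ker (gabidulinMap F K a b)) ≤ 1 := by
  classical
  have hq : 1 < Fintype.card F := Fintype.one_lt_card
  set p : K[X] := C a * X + C b * X ^ Fintype.card F with hp
  have hp0 : p ≠ 0 := by
    intro h0
    apply h
    have h1 : p.coeff 1 = a := by
      simp [hp, coeff_X_pow, hq.ne]
    have h2 : p.coeff (Fintype.card F) = b := by
      simp [hp, coeff_X, hq.ne]
    rw [h0, coeff_zero] at h1 h2
    rw [← h1, ← h2]
    rfl
  have hdeg : p.natDegree ≤ Fintype.card F := by
    refine natDegree_add_le_of_degree_le ?_ (natDegree_C_mul_X_pow_le _ _)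
    exact (natDegree_C_mul_le _ _).trans (natDegree_X_le.trans hq.le)
  have hsub : (LinearMap.ker (gabidulinMap F K a b) : Set K) ⊆ (p.roots.toFinset : Set K) := by
    intro x hx
    simp only [SetLike.mem_coe, LinearMap.mem_ker, gabidulinMap_apply] at hx
    have hroot : p.IsRoot x := by simp [hp, hx]
    exact Multiset.mem_toFinset.2 ((mem_roots hp0).2 hroot)
  have hcard : Nat.card (LinearMap.ker (gabidulinMap F K a b)) ≤ Fintype.card F := by
    calc Nat.card (LinearMap.ker (gabidulinMap F K a b))
        = (LinearMap.ker (gabidulinMap F K a b) : Set K).ncard := rfl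
      _ ≤ (p.roots.toFinset : Set K).ncard := Set.ncard_le_ncard hsub (Finset.finite_toSet _)
      _ = p.roots.toFinset.card := Set.ncard_coe_finset _
      _ ≤ p.roots.card := Multiset.toFinset_card_le _
      _ ≤ p.natDegree := card_roots' _
      _ ≤ _ := hdeg
  rw [Module.natCard_eq_pow_finrank (K := F), Nat.card_eq_fintype_card] at hcard
  by_contra! hlt
  exact absurd hcard (not_le.2 (by simpa using Nat.pow_lt_pow_right hq hlt))

end Gabidulin

section Subspaces

variable {F K : Type*} [Field F] [AddCommGroup K] [Module F K]

lemma finrank_graph (f : K →ₗ[F] K) : finrank F f.graph = finrank F K := by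
  rw [LinearMap.graph_eq_range_prod]
  exact LinearMap.finrank_range_of_inj fun x y h => (Prod.ext_iff.1 h).1

variable [FiniteDimensional F K]

lemma finrank_le_of_le_graph {f : K →ₗ[F] K} {N : Submodule F (K × K)} {W : Submodule F K}
    (hN : N ≤ f.graph) (hW : ∀ x ∈ N, x.1 ∈ W) : finrank F N ≤ finrank F W := by
  refine LinearMap.finrank_le_finrank_of_injective
    (f := ((LinearMap.fst F K K).comp N.subtype).codRestrict W fun x => hW x x.2) ?_
  rintro ⟨x, hx⟩ ⟨y, hy⟩ h
  have h1 : x.1 = y.1 := congrArg Subtype.val h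
  have hx2 := (LinearMap.mem_graph_iff _ _).1 (hN hx)
  have hy2 := (LinearMap.mem_graph_iff _ _).1 (hN hy)
  exact Subtype.ext (Prod.ext h1 (by rw [hx2, hy2, h1]))

lemma finrank_prod (W P : Submodule F K) :
    finrank F (W.prod P) = finrank F W + finrank F P := by
  rw [← Module.finrank_prod]
  exact LinearEquiv.finrank_eq
    { toFun := fun x => (⟨x.1.1, x.2.1⟩, ⟨x.1.2, x.2.2⟩)
      invFun := fun x => ⟨(x.1, x.2), x.1.2, x.2.2⟩
      map_add' := fun _ _ => rfl
      map_smul' := fun _ _ => rfl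
      left_inv := fun _ => rfl
      right_inv := fun _ => rfl }

lemma finrank_inf_lt {P P' : Submodule F K} (h : P ≠ P') (hd : finrank F P = finrank F P') :
    finrank F (P ⊓ P' : Submodule F K) < finrank F P := by
  refine Submodule.finrank_lt_finrank_of_lt (lt_of_le_of_ne inf_le_left fun he => h ?_)
  exact Submodule.eq_of_le_of_finrank_eq (inf_eq_left.1 he) hd

variable (F K) in
/-- Finite-dimensional spaces carry a correlation: an injective map on subspaces which exchanges
dimension and codimension. -/
lemma exists_correlation : ∃ D : Submodule F K → Submodule F K, Function.Injective D ∧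
    ∀ W : Submodule F K, finrank F W + finrank F (D W) = finrank F K := by
  let e : K ≃ₗ[F] Dual F K := (finBasis F K).toDualEquiv
  refine ⟨fun W => (W.map e.toLinearMap).dualCoannihilator, fun W W' h => ?_, fun W => ?_⟩
  · have h' := congrArg Submodule.dualAnnihilator h
    simp only [Subspace.dualCoannihilator_dualAnnihilator_eq] at h'
    exact Submodule.map_injective_of_injective e.injective h'
  · have := Subspace.finrank_add_finrank_dualCoannihilator_eq (W.map e.toLinearMap)
    rwa [LinearEquiv.finrank_map_eq] at this

end Subspaces

/-- The code of size `q^6 + q^2 + q + 1` in `K × K`, as a family of subspaces. -/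
lemma exists_family (F K : Type*) [Field F] [Fintype F] [Field K] [Algebra F K]
    (h3 : finrank F K = 3) : ∃ f : (K × K) ⊕ ℙ F K → Submodule F (K × K),
      (∀ i, finrank F (f i) = 3) ∧
      ∀ i j, i ≠ j → finrank F (f i ⊓ f j : Submodule F (K × K)) ≤ 1 := by
  have : FiniteDimensional F K := .of_finrank_pos (by omega)
  obtain ⟨D, hD, hdim⟩ := exists_correlation F K
  have hgp (a : K × K) (W : ℙ F K) : finrank F ((gabidulinMap F K a.1 a.2).graph ⊓
      W.submodule.prod (D W.submodule) : Submodule F (K × K)) ≤ 1 := by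
    rw [← W.finrank_submodule]
    exact finrank_le_of_le_graph inf_le_left fun x hx => hx.2.1
  refine ⟨Sum.elim (fun a => (gabidulinMap F K a.1 a.2).graph)
    (fun W => W.submodule.prod (D W.submodule)), ?_, ?_⟩
  · rintro (a | W)
    · exact (finrank_graph _).trans h3
    · exact (finrank_prod _ _).trans ((hdim _).trans h3)
  · rintro (a | W) (a' | W') hne
    · have hne' : (a.1 - a'.1, a.2 - a'.2) ≠ 0 := by
        intro h
        exact hne (congrArg Sum.inl (sub_eq_zero.1 h))
      refine le_trans (finrank_le_of_le_graph inf_le_left fun x hx => ?_)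
        (finrank_ker_gabidulinMap_le (F := F) hne')
      have h1 := (LinearMap.mem_graph_iff _ _).1 hx.1
      have h2 := (LinearMap.mem_graph_iff _ _).1 hx.2
      rw [← gabidulinMap_sub, LinearMap.mem_ker, LinearMap.sub_apply, ← h1, ← h2, sub_self]
    · exact hgp a W'
    · have := hgp a' W
      rwa [inf_comm] at this
    · have hW : W.submodule ≠ W'.submodule := fun h =>
        hne (congrArg Sum.inr (Projectivization.submodule_injective h))
      have hl := W.finrank_submodule
      have hl' := W'.finrank_submodule
      have hd := hdim W.submodule
      have hd' := hdim W'.submodule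
      have h1 := finrank_inf_lt hW (by omega)
      have h2 := finrank_inf_lt (hD.ne hW) (by omega)
      change finrank F (W.submodule.prod (D W.submodule) ⊓
        W'.submodule.prod (D W'.submodule) : Submodule F (K × K)) ≤ 1
      rw [Submodule.prod_inf_prod, finrank_prod]
      omega

end ConstantDimensionCode

open ConstantDimensionCode in
/-- Over any finite field with `q` elements there exists a constant
dimension code of 3-dimensional subspaces of `𝔽_q^6` of cardinality `q^6 + q^2 + q`
with minimum subspace distance 4. -/
theorem constant_dimension_code_G3_6
    (𝔽 : Type*) [Field 𝔽] [Fintype 𝔽] (q : ℕ) (hq : Fintype.card 𝔽 = q) :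
    ∃ C : Finset (Submodule 𝔽 (Fin 6 → 𝔽)),
      C.card = q^6 + q^2 + q ∧
      (∀ U ∈ C, Module.finrank 𝔽 U = 3) ∧
      (∀ U ∈ C, ∀ V ∈ C, U ≠ V →
        4 ≤ 2 * (3 - Module.finrank 𝔽 (U ⊓ V : Submodule 𝔽 (Fin 6 → 𝔽)))) := by
  classical
  obtain ⟨p, hp⟩ := CharP.exists 𝔽
  have : Fact p.Prime := ⟨CharP.char_is_prime 𝔽 p⟩
  let K := FiniteField.Extension 𝔽 p 3
  have h3 : finrank 𝔽 K = 3 := FiniteField.finrank_extension 𝔽 p 3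
  have hK : Nat.card K = q ^ 3 := by
    rw [FiniteField.natCard_extension, Nat.card_eq_fintype_card, hq]
  obtain ⟨f, hf, hff⟩ := exists_family 𝔽 K h3
  let e : (K × K) ≃ₗ[𝔽] (Fin 6 → 𝔽) := LinearEquiv.ofFinrankEq _ _ (by simp [h3])
  have hinj : Function.Injective f := by
    intro i j hij
    by_contra hne
    have := hff i j hne
    rw [← hij, inf_idem, hf] at this
    omega
  let g : (K × K) ⊕ ℙ 𝔽 K → Submodule 𝔽 (Fin 6 → 𝔽) := fun i => (f i).map e.toLinearMap
  have hg : Function.Injective g := (Submodule.map_injective_of_injective e.injective).comp hinj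
  have : Finite (ℙ 𝔽 K) := Projectivization.finite_iff_of_finite 𝔽 K |>.2 inferInstance
  have := Fintype.ofFinite ((K × K) ⊕ ℙ 𝔽 K)
  have hcard : (Finset.univ.image g).card = q ^ 6 + q ^ 2 + q + 1 := by
    rw [Finset.card_image_of_injective _ hg, Finset.card_univ, ← Nat.card_eq_fintype_card,
      Nat.card_sum, Nat.card_prod, hK, Projectivization.card_of_finrank 𝔽 K h3,
      Nat.card_eq_fintype_card, hq]
    simp only [Finset.sum_range_succ, Finset.sum_range_zero]
    ring
  obtain ⟨C, hC, hCcard⟩ := Finset.exists_subset_card_eq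
    (s := Finset.univ.image g) (n := q ^ 6 + q ^ 2 + q) (by omega)
  refine ⟨C, hCcard, fun U hU => ?_, fun U hU V hV hne => ?_⟩
  · obtain ⟨i, -, rfl⟩ := Finset.mem_image.1 (hC hU)
    exact (LinearEquiv.finrank_map_eq e (f i)).trans (hf i)
  · obtain ⟨i, -, rfl⟩ := Finset.mem_image.1 (hC hU)
    obtain ⟨j, -, rfl⟩ := Finset.mem_image.1 (hC hV)
    have h1 := hff i j fun h => hne (congrArg g h)
    have h2 : finrank 𝔽 (g i ⊓ g j : Submodule 𝔽 (Fin 6 → 𝔽)) =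
        finrank 𝔽 (f i ⊓ f j : Submodule 𝔽 (K × K)) := by
      rw [← LinearEquiv.finrank_map_eq e (f i ⊓ f j)]
      exact congrArg (fun W : Submodule 𝔽 (Fin 6 → 𝔽) => finrank 𝔽 W)
        (Submodule.map_inf e.toLinearMap e.injective).symm
    omega
end

section
/- Let 𝔽_q be a finite field with q elements. There exists a set C of 3-dimensional subspaces of 𝔽_q^7 with |C| = q^8 + q^4 + q^3 + 2q^2 + q + 1 such that the subspace distance between any two distinct elements of C is at least 4 (i.e., a [7, 4, q^8 + q^4 + q^3 + 2q^2 + q + 1, 3] constant dimension code exists). -/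
/-!
Write the ambient space as `V = F³ × W` with `W = F⁴`. The code is the union of two families.

* A lifted maximum rank distance code: the `q^8` graphs of linear maps `F³ → W` any two of which
  differ by a map with kernel of dimension at most one (`exists_rank_metric_code`). The maps are
  `x ↦ a x + b x^q` on the field `K` of degree 4 over `F`, restricted to a 3-dimensional subspace
  of `K`.
* For each of the `(q² + 1)(q² + q + 1) = q^4 + q^3 + 2q^2 + q + 1` two-dimensional subspaces `L` of
  `W`, one space `plane v w L = (0 × L) + ⟨(v, w)⟩` with `v ≠ 0`.

A graph meets `0 × W` trivially, so the projection to `F³` embeds its intersection with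
`plane v w L` into `⟨v⟩`. Two planes belonging to `L ≠ L'` meet in dimension at most one as soon as
`v, v'` are not proportional, or `L ∩ L' = 0`, or `v = v'` and `w - w' ∉ L + L'`
(`finrank_plane_inf_plane_le`).

It remains to choose `v` and `w` for every `L`. In the language of `PG(3, q)`, fix the line
`ℓ = 0 × F²` of `W = F² × F²` and identify the points of `ℓ` with the planes through `ℓ`. The lines
of `PG(3, q)` are then the following; the classes sharing the same `v` use `3q + 1 ≤ q² + q + 1`
points of `PG(2, q)`, and the explicit `v` below are distinct for every `q`.

* The `q^4` lines skew to `ℓ`, i.e. graphs `{(x, xA)}` of 2×2 matrices. They are split into `q`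
  classes according to `A₁₂ - A₂₁`. For two members of a class which meet, the difference of the
  matrices is symmetric of rank one, `k • zᵀz`, and the condition `w - w' ∉ L + L'` becomes the
  non-vanishing at `z` of a binary cubic form without nontrivial zeros.
* The line `ℓ` itself, which is disjoint from all of these and can be added to one of their classes.
* The `q²` lines through a point `P` of `ℓ` outside the plane attached to `P`. They form one class
  for each `P`; the shifts come from a 2×2 matrix without eigenvalues.
* The `q` lines other than `ℓ` through `P` in the plane attached to `P`. They are distributed into
  `q` classes of pairwise disjoint lines, one line for each `P`.

The cubic form and the matrix exist because `F` has irreducible polynomials of degree 3 and 2.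
-/

/-! ### Lines of `PG(3, q)` with directions and shifts -/

namespace CDC

open Module

/-- The two-dimensional subspaces of `F² × F²`, sorted by their position relative to
`ℓ = 0 × F²`. A point of `ℓ` is encoded by `P : Option F`, where `some p` stands for `⟨(1, p)⟩` and
`none` for `⟨(0, 1)⟩`; the same encoding, in the first factor, is used for planes through `ℓ`.

* `skew a b c d` is the graph `{(x, xA)}` of the matrix `A` with rows `(a, b)` and `(c, d)`.
* `axis` is `ℓ`.
* `tilt P t s` is a line through `P` not contained in the plane attached to `P`.
* `tang P s` is a line other than `ℓ` through `P` in the plane attached to `P`. -/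
inductive Line (F : Type*) : Type _
  | skew (a b c d : F)
  | axis
  | tilt (P : Option F) (t s : F)
  | tang (P : Option F) (s : F)

namespace Line

variable {F : Type*} [Field F]

/-- The subspaces as a disjoint union of products, for counting. -/
def equivSum : Line F ≃ (F × F × F × F) ⊕ Unit ⊕ (Option F × F × F) ⊕ (Option F × F) where
  toFun
    | skew a b c d => .inl (a, b, c, d)
    | axis => .inr (.inl ())
    | tilt P t s => .inr (.inr (.inl (P, t, s)))
    | tang P s => .inr (.inr (.inr (P, s)))
  invFun
    | .inl (a, b, c, d) => skew a b c d
    | .inr (.inl ()) => axis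
    | .inr (.inr (.inl (P, t, s))) => tilt P t s
    | .inr (.inr (.inr (P, s))) => tang P s
  left_inv := by rintro (_ | _ | _ | _) <;> rfl
  right_inv := by rintro (_ | _ | _ | _) <;> rfl

/-- First spanning vector; for lines meeting `ℓ` it is a vector of `ℓ`. -/
def gen₁ : Line F → F × F × F × F
  | skew a b _ _ => (1, 0, a, b)
  | axis => (0, 0, 1, 0)
  | tilt (some p) _ _ => (0, 0, 1, p)
  | tilt none _ _ => (0, 0, 0, 1)
  | tang (some p) _ => (0, 0, 1, p)
  | tang none _ => (0, 0, 0, 1)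

/-- Second spanning vector. With `z` the representative `(1, p)` or `(0, 1)` of `P`, and `r` the
complementary vector `(0, 1)` or `(1, 0)`, it is `(r + t z, s r)` for `tilt P t s` and `(z, s r)`
for `tang P s`. -/
def gen₂ : Line F → F × F × F × F
  | skew _ _ c d => (0, 1, c, d)
  | axis => (0, 0, 0, 1)
  | tilt (some p) t s => (t, 1 + t * p, 0, s)
  | tilt none t s => (1, t, s, 0)
  | tang (some p) s => (1, p, 0, s)
  | tang none s => (0, 1, s, 0)

/-- The two-dimensional subspace of `F⁴` encoded by an index. -/
def carrier (i : Line F) : Submodule F (F × F × F × F) := Submodule.span F {gen₁ i, gen₂ i}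

/-- The vector `v ∈ F³` used for the plane over a line. Two of these vectors are proportional only
if they are equal. -/
def dir : Line F → F × F × F
  | skew _ b c _ => (1, b - c, 0)
  | axis => (1, 0, 0)
  | tilt (some p) _ _ => (0, 1, p)
  | tilt none _ _ => (0, 0, 1)
  | tang _ s => (1, s, 1)

/-- The vector `w ∈ F⁴` used for the plane over a line, where `x² + m x + n` and
`x³ + e x² + f x + g` are polynomials without roots in `F`. For skew lines it is
`(0, (-g d, a + e b + f d))`; at `A = k • (x, y)ᵀ(x, y)` the determinant of `(x, y)` and its
last two coordinates is `k (x³ + e x² y + f x y² + g y³)`. For tilted lines it is `(α z, γ r)`, with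
`z` and `r` as in `gen₂` and `(α, γ) = (-n s, t - m s)`, which is a linear map of `(t, s)` without
eigenvalues in `F`. -/
def shift (m n e f g : F) : Line F → F × F × F × F
  | skew a b _ d => (0, 0, -g * d, a + e * b + f * d)
  | axis => 0
  | tilt (some p) t s => (-n * s, -n * s * p, 0, t - m * s)
  | tilt none t s => (0, -n * s, t - m * s, 0)
  | tang _ _ => 0

theorem mem_carrier {i : Line F} {z : F × F × F × F} :
    z ∈ i.carrier ↔ ∃ a b : F, a • i.gen₁ + b • i.gen₂ = z := Submodule.mem_span_pair

theorem gen_indep (i : Line F) {a b : F} (h : a • i.gen₁ + b • i.gen₂ = 0) : a = 0 ∧ b = 0 := by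
  rcases i with ⟨_, _, _, _⟩ | _ | ⟨_ | _, _, _⟩ | ⟨_ | _, _⟩ <;>
    simp [gen₁, gen₂, Prod.ext_iff] at h <;> grind

theorem finrank_carrier (i : Line F) : finrank F i.carrier = 2 := by
  have h : LinearIndependent F ![i.gen₁, i.gen₂] :=
    LinearIndependent.pair_iff.2 fun a b hab => i.gen_indep hab
  have := finrank_span_eq_card h
  rwa [Matrix.range_cons, Matrix.range_cons, Matrix.range_empty, Set.union_empty,
    Set.singleton_union, Fintype.card_fin] at this

theorem carrier_injective : Function.Injective (carrier : Line F → _) := by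
  intro i j hij
  have h1 : i.gen₁ ∈ j.carrier := hij ▸ Submodule.subset_span (by simp)
  have h2 : i.gen₂ ∈ j.carrier := hij ▸ Submodule.subset_span (by simp)
  rw [mem_carrier] at h1 h2
  obtain ⟨a1, b1, h1⟩ := h1
  obtain ⟨a2, b2, h2⟩ := h2
  rcases i with ⟨_, _, _, _⟩ | _ | ⟨_ | _, _, _⟩ | ⟨_ | _, _⟩ <;>
  rcases j with ⟨_, _, _, _⟩ | _ | ⟨_ | _, _, _⟩ | ⟨_ | _, _⟩ <;>
    simp [gen₁, gen₂, Prod.ext_iff] at h1 h2 ⊢ <;> grind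

theorem dir_ne_zero (i : Line F) : i.dir ≠ 0 := by
  rcases i with ⟨_, _, _, _⟩ | _ | ⟨_ | _, _, _⟩ | ⟨_ | _, _⟩ <;> simp [dir, Prod.ext_iff]

/-- The map `(t, s) ↦ (-n s, t - m s)` has no eigenvector, since its characteristic polynomial is
`x² + m x + n`. -/
theorem tilt_aux {m n b t s : F} (h2 : ∀ x : F, x ^ 2 + m * x + n ≠ 0)
    (h₁ : b * t = -n * s) (h₂ : b * s = t - m * s) (h : ¬ (t = 0 ∧ s = 0)) : False := by
  have ht : t = (b + m) * s := by linear_combination -h₂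
  have hs : s ≠ 0 := by
    rintro rfl
    exact h ⟨by simpa using ht, rfl⟩
  refine h2 b (mul_right_cancel₀ hs ?_)
  linear_combination h₁ - b * ht

/-- Let `S` be the nonzero symmetric matrix with entries `A, B, B, D`. If `S` is singular then
`(-g D, A + e B + f D)` is not in its row space. -/
theorem skew_aux {e f g A B D a b u v : F} (h3 : ∀ x : F, x ^ 3 + e * x ^ 2 + f * x + g ≠ 0)
    (huv : ¬ (u = 0 ∧ v = 0)) (h₁ : u * A + v * B = 0) (h₂ : u * B + v * D = 0)
    (k₁ : a * A + b * B = -g * D) (k₂ : a * B + b * D = A + e * B + f * D)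
    (h : ¬ (A = 0 ∧ B = 0 ∧ D = 0)) : False := by
  have hdet : A * D = B ^ 2 := by
    by_cases hu : u = 0
    · have hv : v ≠ 0 := fun hv => huv ⟨hu, hv⟩
      refine mul_left_cancel₀ hv ?_
      linear_combination A * h₂ - B * h₁
    · refine mul_left_cancel₀ hu ?_
      linear_combination D * h₁ - B * h₂
  have hD : D ≠ 0 := by
    rintro rfl
    have hB : B = 0 := by simpa using hdet.symm
    subst hB
    exact h ⟨by simpa using k₂.symm, rfl, rfl⟩
  obtain ⟨x, rfl⟩ : ∃ x, B = x * D := ⟨B / D, by field_simp⟩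
  obtain rfl : A = x ^ 2 * D := mul_right_cancel₀ hD (by linear_combination hdet)
  have e₁ : x * (a * x + b) = -g := mul_right_cancel₀ hD (by linear_combination k₁)
  have e₂ : a * x + b = x ^ 2 + e * x + f := mul_right_cancel₀ hD (by linear_combination k₂)
  refine h3 x ?_
  linear_combination e₁ - x * e₂

/-- The choice of directions and shifts satisfies the hypothesis of
`finrank_plane_inf_plane_le` for any two distinct lines. -/
theorem key {m n e f g : F} (h2 : ∀ x : F, x ^ 2 + m * x + n ≠ 0)
    (h3 : ∀ x : F, x ^ 3 + e * x ^ 2 + f * x + g ≠ 0) {i j : Line F} (hij : i ≠ j) :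
    (∀ c c' : F, c • i.dir = c' • j.dir → c = 0) ∨ i.carrier ⊓ j.carrier = ⊥ ∨
      (i.dir = j.dir ∧ shift m n e f g i - shift m n e f g j ∉ i.carrier ⊔ j.carrier) := by
  by_cases hd : ∀ c c' : F, c • i.dir = c' • j.dir → c = 0
  · exact .inl hd
  right
  push Not at hd
  obtain ⟨c, c', hc, hc0⟩ := hd
  by_cases hinf : ∀ a b a' b' : F,
      a • i.gen₁ + b • i.gen₂ = a' • j.gen₁ + b' • j.gen₂ → a = 0 ∧ b = 0
  · left
    refine (Submodule.eq_bot_iff _).2 fun z hz => ?_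
    obtain ⟨hz1, hz2⟩ := hz
    obtain ⟨a, b, rfl⟩ := mem_carrier.1 hz1
    obtain ⟨a', b', h'⟩ := mem_carrier.1 hz2
    obtain ⟨rfl, rfl⟩ := hinf a b a' b' h'.symm
    simp
  right
  push Not at hinf
  obtain ⟨u, v, u', v', huv, hne⟩ := hinf
  have main : i.dir = j.dir ∧ ∀ a b a' b' : F, (a • i.gen₁ + b • i.gen₂) +
      (a' • j.gen₁ + b' • j.gen₂) ≠ shift m n e f g i - shift m n e f g j := by
    rcases i with ⟨a₁, b₁, c₁, d₁⟩ | _ | ⟨_ | p, t, s⟩ | ⟨_ | p, s⟩ <;>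
    rcases j with ⟨a₂, b₂, c₂, d₂⟩ | _ | ⟨_ | p', t', s'⟩ | ⟨_ | p', s'⟩ <;>
    simp only [dir, Prod.smul_mk, Prod.mk.injEq, smul_eq_mul, mul_one, mul_zero] at hc
    -- Proportional directions leave only pairs of lines in a common class.
    all_goals try (exfalso; grind)
    all_goals simp only [gen₁, gen₂, Prod.smul_mk, Prod.mk_add_mk, Prod.mk.injEq, smul_eq_mul,
      mul_one, mul_zero, zero_add, add_zero] at huv
    all_goals try (exfalso; grind)
    -- Remaining: skew lines, tilted lines through `none` or `some p`, and the impossible case of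
    -- two different `tang` lines with the same `s` that meet.
    · obtain ⟨rfl, hc, -⟩ := hc
      have hd : b₁ - c₁ = b₂ - c₂ := mul_left_cancel₀ hc0 hc
      refine ⟨by simp [dir, hd], fun a b a' b' h => ?_⟩
      simp only [gen₁, gen₂, shift, Prod.smul_mk, Prod.mk_add_mk, Prod.mk_sub_mk, Prod.mk.injEq,
        smul_eq_mul, mul_one, mul_zero, zero_add, add_zero, sub_zero] at h
      obtain ⟨hu, hv, h₁, h₂⟩ := huv
      subst hu hv
      obtain ⟨k₁, k₂, k₃, k₄⟩ := h
      obtain rfl : a' = -a := by linear_combination k₁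
      obtain rfl : b' = -b := by linear_combination k₂
      refine skew_aux h3 (A := a₁ - a₂) (B := b₁ - b₂) (D := d₁ - d₂) (a := a) (b := b)
        (u := u) (v := v) (fun h => hne h.1 h.2) ?_ ?_ ?_ ?_ ?_
      · linear_combination h₁ + v * hd
      · linear_combination h₂
      · linear_combination k₃ + b * hd
      · linear_combination k₄
      · rintro ⟨hA, hB, hD⟩
        refine hij ?_
        rw [sub_eq_zero.1 hA, sub_eq_zero.1 hB, sub_eq_zero.1 hD,
          show c₁ = c₂ by linear_combination hB - hd]
    · refine ⟨rfl, fun a b a' b' h => ?_⟩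
      simp only [gen₁, gen₂, shift, Prod.smul_mk, Prod.mk_add_mk, Prod.mk_sub_mk, Prod.mk.injEq,
        smul_eq_mul, mul_one, mul_zero, zero_add, add_zero, sub_zero] at h
      refine tilt_aux h2 (b := b) (t := t - t') (s := s - s') ?_ ?_ ?_ <;> grind
    · refine ⟨by grind [dir], fun a b a' b' h => ?_⟩
      simp only [gen₁, gen₂, shift, Prod.smul_mk, Prod.mk_add_mk, Prod.mk_sub_mk, Prod.mk.injEq,
        smul_eq_mul, mul_one, mul_zero, zero_add, add_zero, sub_zero] at h
      refine tilt_aux h2 (b := b) (t := t - t') (s := s - s') ?_ ?_ ?_ <;> grind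
    · obtain ⟨rfl, hc, -⟩ := hc
      obtain rfl : s = s' := mul_left_cancel₀ hc0 hc
      obtain ⟨rfl, hv, rfl, hu⟩ := huv
      refine absurd ?_ hij
      by_cases hv0 : v = 0
      · subst hv0
        have hu0 : u ≠ 0 := fun h => hne h rfl
        rw [mul_left_cancel₀ hu0 (by linear_combination hu : u * p = u * p')]
      · rw [mul_left_cancel₀ hv0 hv]
  refine ⟨main.1, fun hmem => ?_⟩
  obtain ⟨y, hy, z, hz, hyz⟩ := Submodule.mem_sup.1 hmem
  obtain ⟨a, b, rfl⟩ := mem_carrier.1 hy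
  obtain ⟨a', b', rfl⟩ := mem_carrier.1 hz
  exact main.2 _ _ _ _ hyz

end Line

/-! ### Intersections of planes and graphs -/

section Planes

variable {F A B : Type*} [Field F] [AddCommGroup A] [Module F A] [AddCommGroup B] [Module F B]

/-- A subspace on which the first projection is injective with values in `⟨v⟩`. -/
theorem finrank_le_one_of_fst {S : Submodule F (A × B)} {v : A} (hv : v ≠ 0)
    (h₁ : ∀ x ∈ S, ∃ c : F, x.1 = c • v) (h₂ : ∀ x ∈ S, x.1 = 0 → x = 0) :
    finrank F S ≤ 1 := by
  let φ : S →ₗ[F] Submodule.span F {v} :=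
    ((LinearMap.fst F A B).domRestrict S).codRestrict _ fun x => by
      obtain ⟨c, hc⟩ := h₁ x x.2
      exact Submodule.mem_span_singleton.2 ⟨c, hc.symm⟩
  have hφ : Function.Injective φ := by
    refine (injective_iff_map_eq_zero φ).2 fun x hx => ?_
    exact Subtype.ext (h₂ x x.2 (congrArg Subtype.val hx))
  exact (LinearMap.finrank_le_finrank_of_injective hφ).trans (finrank_span_singleton hv).le

/-- The subspace `(0 × L) + ⟨(v, w)⟩` of `A × B`. -/
def plane (v : A) (w : B) (L : Submodule F B) : Submodule F (A × B) :=
  L.map (LinearMap.inr F A B) ⊔ Submodule.span F {(v, w)}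

theorem finrank_map_inr (L : Submodule F B) :
    finrank F (L.map (LinearMap.inr F A B)) = finrank F L :=
  (L.equivMapOfInjective _ LinearMap.inr_injective).finrank_eq.symm

theorem mem_plane {v : A} {w : B} {L : Submodule F B} {z : A × B} :
    z ∈ plane v w L ↔ ∃ c : F, ∃ l ∈ L, z = (c • v, l + c • w) := by
  constructor
  · intro h
    obtain ⟨y, ⟨l, hl, rfl⟩, x, hx, rfl⟩ := Submodule.mem_sup.1 h
    obtain ⟨c, rfl⟩ := Submodule.mem_span_singleton.1 hx
    exact ⟨c, l, hl, by simp⟩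
  · rintro ⟨c, l, hl, rfl⟩
    exact Submodule.mem_sup.2 ⟨(0, l), ⟨l, hl, rfl⟩, c • (v, w),
      Submodule.mem_span_singleton.2 ⟨c, rfl⟩, by simp⟩

theorem finrank_plane [FiniteDimensional F A] [FiniteDimensional F B] {v : A}
    (hv : v ≠ 0) (w : B) (L : Submodule F B) :
    finrank F (plane v w L) = finrank F L + 1 := by
  have hinf : L.map (LinearMap.inr F A B) ⊓ Submodule.span F {(v, w)} = ⊥ := by
    refine (Submodule.eq_bot_iff _).2 ?_
    rintro _ ⟨⟨l, -, rfl⟩, hx⟩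
    obtain ⟨c, hc⟩ := Submodule.mem_span_singleton.1 hx
    have h1 : c • v = 0 := congrArg Prod.fst hc
    have hc0 : c = 0 := (smul_eq_zero.1 h1).resolve_right hv
    rw [← hc, hc0, zero_smul]
  have h := Submodule.finrank_sup_add_finrank_inf_eq (L.map (LinearMap.inr F A B))
    (Submodule.span F {(v, w)})
  rw [hinf, finrank_bot, add_zero, finrank_span_singleton (by simp [hv]),
    finrank_map_inr] at h
  exact h

theorem finrank_plane_inf_graph_le {v : A} (hv : v ≠ 0) (w : B) (L : Submodule F B)
    (g : A →ₗ[F] B) : finrank F (plane v w L ⊓ g.graph : Submodule F (A × B)) ≤ 1 := by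
  refine finrank_le_one_of_fst hv ?_ ?_
  · rintro _ ⟨hx, -⟩
    obtain ⟨c, l, -, rfl⟩ := mem_plane.1 hx
    exact ⟨c, rfl⟩
  · rintro ⟨x, y⟩ ⟨-, hx⟩ (rfl : x = 0)
    have : y = g 0 := hx
    simp [this]

/-- The intersection of two graphs embeds into the space where the maps agree. -/
theorem finrank_graph_inf_graph [FiniteDimensional F A] (g h : A →ₗ[F] B) :
    finrank F (g.graph ⊓ h.graph : Submodule F (A × B)) ≤ finrank F (LinearMap.ker (g - h)) := by
  let φ : (g.graph ⊓ h.graph : Submodule F (A × B)) →ₗ[F] LinearMap.ker (g - h) :=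
    ((LinearMap.fst F A B).domRestrict _).codRestrict _ fun x => by
      have h1 : x.1.2 = g x.1.1 := x.2.1
      have h2 : x.1.2 = h x.1.1 := x.2.2
      simp [← h1, ← h2]
  refine LinearMap.finrank_le_finrank_of_injective (f := φ) ?_
  refine (injective_iff_map_eq_zero φ).2 ?_
  rintro ⟨⟨x, y⟩, hx⟩ h0
  have hx0 : x = 0 := congrArg Subtype.val h0
  have h1 : y = g x := hx.1
  subst hx0
  simp [h1]

theorem finrank_graph (g : A →ₗ[F] B) : finrank F g.graph = finrank F A := by
  rw [LinearMap.graph_eq_range_prod]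
  exact LinearMap.finrank_range_of_inj fun x y h => congrArg Prod.fst h

/-- In the first and third cases the intersection lies in `0 × (L ∩ L')`; in the second one it
projects injectively to `⟨v⟩`. -/
theorem finrank_plane_inf_plane_le [FiniteDimensional F A] [FiniteDimensional F B]
    {v v' : A} (hv : v ≠ 0) (hv' : v' ≠ 0) {w w' : B} {L L' : Submodule F B}
    (hL : finrank F L = 2) (hL' : finrank F L' = 2) (hne : L ≠ L')
    (h : (∀ c c' : F, c • v = c' • v' → c = 0) ∨ L ⊓ L' = ⊥ ∨ (v = v' ∧ w - w' ∉ L ⊔ L')) :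
    finrank F (plane v w L ⊓ plane v' w' L' : Submodule F (A × B)) ≤ 1 := by
  have hmeet : finrank F (L ⊓ L' : Submodule F B) ≤ 1 := by
    have hlt : L ⊓ L' < L := inf_le_left.lt_of_ne fun he =>
      hne (Submodule.eq_of_le_of_finrank_eq (inf_eq_left.1 he) (hL.trans hL'.symm))
    have := Submodule.finrank_lt_finrank_of_lt hlt
    omega
  -- An intersection contained in `0 × B` is contained in `0 × (L ∩ L')`.
  have hsub : (∀ z ∈ plane v w L ⊓ plane v' w' L', z.1 = 0) →
      finrank F (plane v w L ⊓ plane v' w' L' : Submodule F (A × B)) ≤ 1 := by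
    intro hz
    have hle : plane v w L ⊓ plane v' w' L' ≤ (L ⊓ L').map (LinearMap.inr F A B) := by
      intro z hzm
      have hz0 := hz z hzm
      obtain ⟨h1, h2⟩ := hzm
      obtain ⟨c, l, hl, rfl⟩ := mem_plane.1 h1
      obtain ⟨c', l', hl', he⟩ := mem_plane.1 h2
      have hcv : c • v = 0 := hz0
      have hc : c = 0 := (smul_eq_zero.1 hcv).resolve_right hv
      have h1 : (0 : A) = c' • v' := hz0.symm.trans (congrArg Prod.fst he)
      have h2 : l + c • w = l' + c' • w' := congrArg Prod.snd he
      refine ⟨l, ⟨hl, ?_⟩, by simp [hc]⟩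
      have hc' : c' = 0 := (smul_eq_zero.1 h1.symm).resolve_right hv'
      have hll : l = l' := by simpa [hc, hc'] using h2
      exact hll ▸ hl'
    refine (Submodule.finrank_mono hle).trans ?_
    rw [finrank_map_inr]
    exact hmeet
  rcases h with h | h | ⟨rfl, h⟩
  · refine hsub ?_
    rintro _ ⟨h1, h2⟩
    obtain ⟨c, l, hl, rfl⟩ := mem_plane.1 h1
    obtain ⟨c', l', hl', he⟩ := mem_plane.1 h2
    simp [h c c' (congrArg Prod.fst he)]
  · refine finrank_le_one_of_fst hv ?_ ?_
    · rintro _ ⟨hx, -⟩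
      obtain ⟨c, l, -, rfl⟩ := mem_plane.1 hx
      exact ⟨c, rfl⟩
    · rintro _ ⟨h1, h2⟩ hz0
      obtain ⟨c, l, hl, rfl⟩ := mem_plane.1 h1
      obtain ⟨c', l', hl', he⟩ := mem_plane.1 h2
      have hc : c = 0 := (smul_eq_zero.1 hz0).resolve_right hv
      have h1 : (0 : A) = c' • v' := hz0.symm.trans (congrArg Prod.fst he)
      have hc' : c' = 0 := (smul_eq_zero.1 h1.symm).resolve_right hv'
      have h2 : l + c • w = l' + c' • w' := congrArg Prod.snd he
      have hll : l = l' := by simpa [hc, hc'] using h2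
      have hl0 : l ∈ L ⊓ L' := ⟨hl, hll ▸ hl'⟩
      rw [h, Submodule.mem_bot] at hl0
      simp [hc, hl0]
  · refine hsub ?_
    rintro _ ⟨h1, h2⟩
    obtain ⟨c, l, hl, rfl⟩ := mem_plane.1 h1
    obtain ⟨c', l', hl', he⟩ := mem_plane.1 h2
    have hcc : c = c' := smul_left_injective F hv (congrArg Prod.fst he)
    subst hcc
    have h2 : l + c • w = l' + c • w' := congrArg Prod.snd he
    by_contra hne0
    have hc : c ≠ 0 := by
      rintro rfl
      simp at hne0
    refine h ?_
    have : w - w' = c⁻¹ • (l' - l) := by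
      rw [eq_inv_smul_iff₀ hc, smul_sub, sub_eq_sub_iff_add_eq_add, add_comm, h2, add_comm]
    rw [this]
    exact Submodule.smul_mem _ _ (Submodule.sub_mem _ (Submodule.mem_sup_right hl')
      (Submodule.mem_sup_left hl))

end Planes

/-! ### Extension fields and the rank metric code -/

section Fields

open Polynomial

theorem eval_ne_zero {F : Type*} [Field F] {f : F[X]} (hf : Irreducible f) (hd : 2 ≤ f.natDegree) (x : F) :
    f.eval x ≠ 0 := by
  intro h
  have h1 : f.natDegree = 1 :=
    natDegree_eq_of_degree_eq_some (degree_eq_one_of_irreducible_of_root hf h)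
  omega

variable (F : Type*) [Field F] [Fintype F]

theorem exists_ext (n : ℕ) (hn : n ≠ 0) : ∃ (K : Type) (_ : Field K) (_ : Fintype K)
    (_ : Algebra F K), finrank F K = n := by
  obtain ⟨p, hp⟩ := CharP.exists F
  have : Fact p.Prime := ⟨CharP.char_is_prime F p⟩
  have : NeZero n := ⟨hn⟩
  exact ⟨FiniteField.Extension F p n, inferInstance, Fintype.ofFinite _, inferInstance,
    FiniteField.finrank_extension F p n⟩

theorem exists_irred (n : ℕ) (hn : n ≠ 0) : ∃ f : F[X], f.Monic ∧ Irreducible f ∧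
    f.natDegree = n := by
  obtain ⟨K, _, _, _, hK⟩ := exists_ext F n hn
  have : FiniteDimensional F K := .of_finite
  obtain ⟨α, hα⟩ := Field.exists_primitive_element_of_finite_top F K
  have hi := Algebra.IsIntegral.isIntegral (R := F) α
  exact ⟨minpoly F α, minpoly.monic hi, minpoly.irreducible hi,
    ((Field.primitive_element_iff_minpoly_natDegree_eq F α).1 hα).trans hK⟩

theorem exists_quadratic : ∃ m n : F, ∀ x : F, x ^ 2 + m * x + n ≠ 0 := by
  obtain ⟨f, hm, hi, hd⟩ := exists_irred F 2 two_ne_zero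
  refine ⟨f.coeff 1, f.coeff 0, fun x hx => eval_ne_zero hi hd.ge x ?_⟩
  have h2 : f.coeff 2 = 1 := hd ▸ hm.coeff_natDegree
  rw [eval_eq_sum_range, hd]
  simp only [Finset.sum_range_succ, Finset.sum_range_zero, h2]
  linear_combination hx

theorem exists_cubic : ∃ e f g : F, ∀ x : F, x ^ 3 + e * x ^ 2 + f * x + g ≠ 0 := by
  obtain ⟨f, hm, hi, hd⟩ := exists_irred F 3 three_ne_zero
  refine ⟨f.coeff 2, f.coeff 1, f.coeff 0, fun x hx => eval_ne_zero hi (by omega) x ?_⟩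
  have h3 : f.coeff 3 = 1 := hd ▸ hm.coeff_natDegree
  rw [eval_eq_sum_range, hd]
  simp only [Finset.sum_range_succ, Finset.sum_range_zero, h3]
  linear_combination hx

variable {F} {K : Type*} [Field K] [Algebra F K]

/-- The elements of `K` fixed by the `q`-power map lie in `F`, as `X^q - X` splits over `F`. -/
theorem mem_range_of_pow_card {z : K} (hz : z ^ Fintype.card F = z) :
    ∃ c : F, algebraMap F K c = z := by
  have hne := FiniteField.X_pow_card_sub_X_ne_zero F (Fintype.one_lt_card (α := F))
  have hs : Splits (X ^ Fintype.card F - X : F[X]) := by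
    rw [splits_iff_card_roots, FiniteField.roots_X_pow_card_sub_X, ← Finset.card_def,
      Finset.card_univ, FiniteField.X_pow_card_sub_X_natDegree_eq _ Fintype.one_lt_card]
  have hr := hs.roots_map (algebraMap F K)
  have hz' : z ∈ ((X ^ Fintype.card F - X : F[X]).map (algebraMap F K)).roots := by
    rw [mem_roots (Polynomial.map_ne_zero hne)]
    simp [hz]
  rw [hr, Multiset.mem_map] at hz'
  obtain ⟨c, -, hc⟩ := hz'
  exact ⟨c, hc⟩

/-- The `F`-linear map `x ↦ a x + b x^q` on `K`, where `q` is the cardinality of `F`. -/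
noncomputable def qPoly (a b : K) : K →ₗ[F] K :=
  LinearMap.mulLeft F a + LinearMap.mulLeft F b ∘ₗ (FiniteField.frobeniusAlgHom F K).toLinearMap

theorem qPoly_apply (a b x : K) : qPoly (F := F) a b x = a * x + b * x ^ Fintype.card F := rfl

/-- For nonzero `x`, `y` in the kernel, `b ≠ 0` and `x^(q-1) = -a/b = y^(q-1)`, so that `y / x` is
fixed by the `q`-power map and belongs to `F`. -/
theorem qPoly_ker {a b : K} (h : a ≠ 0 ∨ b ≠ 0) :
    finrank F (LinearMap.ker (qPoly (F := F) a b)) ≤ 1 := by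
  by_cases hbot : LinearMap.ker (qPoly (F := F) a b) = ⊥
  · rw [hbot, finrank_bot]
    exact zero_le_one
  obtain ⟨x, hx, hx0⟩ := Submodule.exists_mem_ne_zero_of_ne_bot hbot
  refine finrank_le_one ⟨x, hx⟩ fun ⟨y, hy⟩ => ?_
  rw [LinearMap.mem_ker, qPoly_apply] at hx hy
  have hb : b ≠ 0 := by
    intro hb
    have ha : a ≠ 0 := h.resolve_right fun h => h hb
    rw [hb, zero_mul, add_zero] at hx
    exact mul_ne_zero ha hx0 hx
  have hxy : (y / x) ^ Fintype.card F = y / x := by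
    rw [div_pow, div_eq_div_iff (pow_ne_zero _ hx0) hx0]
    refine mul_left_cancel₀ hb ?_
    linear_combination x * hy - y * hx
  obtain ⟨c, hc⟩ := mem_range_of_pow_card hxy
  refine ⟨c, Subtype.ext ?_⟩
  change c • x = y
  rw [Algebra.smul_def, hc, div_mul_cancel₀ _ hx0]

end Fields

/-- The maps are `κ ∘ (x ↦ a x + b x^q) ∘ ι` for `(a, b) ∈ K²`, with `K` of degree 4 over `F`,
`κ : K ≃ F⁴` and an embedding `ι : F³ → K`. -/
theorem exists_rank_metric_code (F : Type*) [Field F] [Fintype F] :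
    ∃ (T : Type) (_ : Fintype T) (g : T → (F × F × F →ₗ[F] F × F × F × F)),
      Fintype.card T = Fintype.card F ^ 8 ∧
        ∀ i j, i ≠ j → finrank F (LinearMap.ker (g i - g j)) ≤ 1 := by
  obtain ⟨K, _, _, _, hK⟩ := exists_ext F 4 four_ne_zero
  have : FiniteDimensional F K := .of_finite
  let κ : K ≃ₗ[F] F × F × F × F := LinearEquiv.ofFinrankEq _ _ (by simp [hK])
  let ι : F × F × F →ₗ[F] K := κ.symm.toLinearMap ∘ₗ LinearMap.inr F F (F × F × F)
  have hι : Function.Injective ι := κ.symm.injective.comp LinearMap.inr_injective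
  refine ⟨K × K, inferInstance, fun a => κ.toLinearMap ∘ₗ qPoly a.1 a.2 ∘ₗ ι, ?_, ?_⟩
  · rw [Fintype.card_prod, Module.card_eq_pow_finrank (K := F) (V := K), hK]
    ring
  rintro ⟨a, b⟩ ⟨a', b'⟩ hne
  have h : a - a' ≠ 0 ∨ b - b' ≠ 0 := by
    by_contra! h
    exact hne (by rw [sub_eq_zero.1 h.1, sub_eq_zero.1 h.2])
  refine le_trans ?_ (qPoly_ker (F := F) h)
  have hmem : ∀ x ∈ LinearMap.ker (κ.toLinearMap ∘ₗ qPoly a b ∘ₗ ι -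
      κ.toLinearMap ∘ₗ qPoly a' b' ∘ₗ ι), ι x ∈ LinearMap.ker (qPoly (F := F) (a - a') (b - b')) := by
    intro x hx
    have hx' : κ (qPoly a b (ι x)) = κ (qPoly a' b' (ι x)) := sub_eq_zero.1 hx
    have hx'' := κ.injective hx'
    rw [qPoly_apply, qPoly_apply] at hx''
    rw [LinearMap.mem_ker, qPoly_apply]
    linear_combination hx''
  exact LinearMap.finrank_le_finrank_of_injective (f := ι.restrict hmem)
    fun x y hxy => Subtype.ext (hι (congrArg Subtype.val hxy))

theorem card_line (F : Type*) [Field F] [Fintype F] [Fintype (Line F)] : Fintype.card (Line F) =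
    Fintype.card F ^ 4 + Fintype.card F ^ 3 + 2 * Fintype.card F ^ 2 + Fintype.card F + 1 := by
  rw [Fintype.card_congr Line.equivSum]
  simp only [Fintype.card_sum, Fintype.card_prod, Fintype.card_option, Fintype.card_unit]
  ring

end CDC

/-- Over any finite field with `q` elements there exists a constant
dimension code of 3-dimensional subspaces of `𝔽_q^7` of cardinality `q^8 + q^4 + q^3 + 2*q^2 + q + 1`
with minimum subspace distance 4. -/
theorem constant_dimension_code_G3_7
    (𝔽 : Type*) [Field 𝔽] [Fintype 𝔽] (q : ℕ) (hq : Fintype.card 𝔽 = q) :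
    ∃ C : Finset (Submodule 𝔽 (Fin 7 → 𝔽)),
      C.card = q^8 + q^4 + q^3 + 2*q^2 + q + 1 ∧
      (∀ U ∈ C, Module.finrank 𝔽 U = 3) ∧
      (∀ U ∈ C, ∀ V ∈ C, U ≠ V →
        4 ≤ 2 * (3 - Module.finrank 𝔽 (U ⊓ V : Submodule 𝔽 (Fin 7 → 𝔽)))) := by
  classical
  obtain ⟨m, n, h2⟩ := CDC.exists_quadratic 𝔽
  obtain ⟨e, f, g, h3⟩ := CDC.exists_cubic 𝔽
  obtain ⟨T, _, γ, hT, hγ⟩ := CDC.exists_rank_metric_code 𝔽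
  let _ : Fintype (CDC.Line 𝔽) := Fintype.ofEquiv _ CDC.Line.equivSum.symm
  let φ : ((𝔽 × 𝔽 × 𝔽) × (𝔽 × 𝔽 × 𝔽 × 𝔽)) ≃ₗ[𝔽] (Fin 7 → 𝔽) :=
    LinearEquiv.ofFinrankEq _ _ (by simp)
  let pl : CDC.Line 𝔽 → Submodule 𝔽 ((𝔽 × 𝔽 × 𝔽) × (𝔽 × 𝔽 × 𝔽 × 𝔽)) := fun i =>
    CDC.plane i.dir (i.shift m n e f g) i.carrier
  let E : T ⊕ CDC.Line 𝔽 → Submodule 𝔽 ((𝔽 × 𝔽 × 𝔽) × (𝔽 × 𝔽 × 𝔽 × 𝔽)) :=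
    Sum.elim (fun t => (γ t).graph) pl
  have hE3 : ∀ i, Module.finrank 𝔽 (E i) = 3 := by
    rintro (t | i)
    · exact (CDC.finrank_graph _).trans (by simp)
    · exact (CDC.finrank_plane i.dir_ne_zero _ _).trans (by rw [i.finrank_carrier])
  have hE1 : ∀ i j, i ≠ j → Module.finrank 𝔽 (E i ⊓ E j : Submodule 𝔽 _) ≤ 1 := by
    rintro (t | i) (t' | j) hne
    · exact (CDC.finrank_graph_inf_graph _ _).trans (hγ _ _ fun h => hne (h ▸ rfl))
    · rw [inf_comm]
      exact CDC.finrank_plane_inf_graph_le j.dir_ne_zero _ _ _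
    · exact CDC.finrank_plane_inf_graph_le i.dir_ne_zero _ _ _
    · have hij : i ≠ j := fun h => hne (h ▸ rfl)
      exact CDC.finrank_plane_inf_plane_le i.dir_ne_zero j.dir_ne_zero i.finrank_carrier
        j.finrank_carrier (CDC.Line.carrier_injective.ne hij) (CDC.Line.key h2 h3 hij)
  have hEinj : Function.Injective E := by
    intro i j hij
    by_contra hne
    have h := hE1 i j hne
    rw [hij, inf_idem, hE3] at h
    omega
  have hinj : Function.Injective fun i => (E i).map φ.toLinearMap :=
    (Submodule.map_injective_of_injective φ.injective).comp hEinj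
  refine ⟨Finset.univ.image fun i => (E i).map φ.toLinearMap, ?_, ?_, ?_⟩
  · rw [Finset.card_image_of_injective _ hinj, Finset.card_univ, Fintype.card_sum, hT,
      CDC.card_line, hq]
    ring
  · intro U hU
    obtain ⟨i, -, rfl⟩ := Finset.mem_image.1 hU
    exact (φ.finrank_map_eq _).trans (hE3 i)
  · intro U hU V hV hne
    obtain ⟨i, -, rfl⟩ := Finset.mem_image.1 hU
    obtain ⟨j, -, rfl⟩ := Finset.mem_image.1 hV
    have hij : i ≠ j := fun h => hne (by rw [h])
    have h1 : Module.finrank 𝔽 ((E i).map φ.toLinearMap ⊓ (E j).map φ.toLinearMap :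
        Submodule 𝔽 (Fin 7 → 𝔽)) ≤ 1 := by
      rw [← Submodule.map_inf _ φ.injective]
      exact (φ.finrank_map_eq _).trans_le (hE1 i j hij)
    omega
end

section
/- Let 𝔽_q be a finite field with q elements. There exists a set C of 3-dimensional subspaces of 𝔽_q^8 with |C| = q^{10} + q^6 + q^5 + 2q^4 + 2q^3 + 2q^2 + q + 1 such that the subspace distance between any two distinct elements of C is at least 4. -/
/-!
Write `𝔽^8 = 𝔽^3 × 𝔽^5` and `S = 0 × 𝔽^5`. The code consists of `q^10` 3-dimensional spaces meeting `S`
trivially (a lifted rank-metric code) and, for every 2-dimensional subspace `L` of `S`, one 3-dimensional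
space meeting `S` exactly in `L`; the number of such `L` is the Gaussian binomial
`[5 choose 2]_q = q^6 + q^5 + 2q^4 + 2q^3 + 2q^2 + q + 1`.

Both families rest on one fact (`exists_pair`): on a space `V` of dimension at least 3 there are
endomorphisms `A`, `B` such that no nontrivial combination `a A + b B` has an eigenvector with
eigenvalue in `𝔽`. They are multiplications by `α`, `β` on the extension field of degree `dim V`,
where `1, α, β` are linearly independent. Hence for `(x, y) ≠ 0` the vectors `x, y, A x + B y` span
at least a 2-dimensional space (`finrank_ker_comb_le_one`). So the spaces spanned by the rows of
`[I_3 | x, y, A x + B y]` pairwise meet in dimension at most 1.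

For the second family let `L` have reduced row echelon basis `x, y` with pivots `i < j`. The
associated space is spanned by `(0, x)`, `(0, y)` and `(f, A x + B y)`, where `f` depends only on
`i + j` modulo 5 and `A`, `B` are a pair as above acting on the 3-dimensional space of vectors
vanishing at `i` and `j`.
* If the pivot sums of two such spaces differ, the corresponding `f`'s are not proportional, so
  the intersection lies in `S`, where it is the intersection of two different 2-dimensional spaces.
* If the sums agree but the pivot pairs differ, the pairs are disjoint (the classes of `i + j` are
  the near-one-factors of `K_5`), so `L ∩ L' = 0`, since nonzero vectors of `L` have their leading
  position at a pivot.
* If the pivot pairs agree, comparing pivot coordinates reduces to `finrank_ker_comb_le_one`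
  applied to the differences of the basis vectors.
-/

open Module

namespace CDC

variable {F : Type*} [Field F]

/-! ### Pencils of endomorphisms without eigenvectors -/

/-- A pair of endomorphisms whose nontrivial combinations have no eigenvector; they are
multiplications by `b₁ / b₀` and `b₂ / b₀`, for a basis `b` of an extension field. -/
lemma exists_pair [Finite F] (V : Type*) [AddCommGroup V] [Module F V] [Module.Finite F V]
    (h : 3 ≤ finrank F V) :
    ∃ A B : V →ₗ[F] V, ∀ (a b c : F) (r : V), r ≠ 0 → a • A r + b • B r = c • r →
      a = 0 ∧ b = 0 := by
  obtain ⟨p, hp⟩ := CharP.exists F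
  have hpp : Fact p.Prime := ⟨CharP.char_is_prime F p⟩
  have hn : NeZero (finrank F V) := ⟨by omega⟩
  let K := FiniteField.Extension F p (finrank F V)
  have hK : finrank F K = finrank F V := FiniteField.finrank_extension F p _
  let e : V ≃ₗ[F] K := LinearEquiv.ofFinrankEq V K hK.symm
  let bs := finBasisOfFinrankEq F K hK
  let g : Fin 3 → Fin (finrank F V) := Fin.castLE h
  have hg : LinearIndependent F (bs ∘ g) :=
    bs.linearIndependent.comp g (Fin.castLE_injective h)
  have h0 : bs (g 0) ≠ 0 := bs.ne_zero _
  refine ⟨e.symm.toLinearMap ∘ₗ LinearMap.mulLeft F (bs (g 1) / bs (g 0)) ∘ₗ e.toLinearMap,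
    e.symm.toLinearMap ∘ₗ LinearMap.mulLeft F (bs (g 2) / bs (g 0)) ∘ₗ e.toLinearMap, ?_⟩
  intro a b c r hr hE
  have hE' := congrArg e hE
  simp only [LinearMap.comp_apply, map_add, map_smul, LinearEquiv.coe_coe,
    LinearEquiv.apply_symm_apply, LinearMap.mulLeft_apply, Algebra.smul_def] at hE'
  have her : e r ≠ 0 := by simpa using hr
  have key : (-c) • bs (g 0) + a • bs (g 1) + b • bs (g 2) = 0 := by
    simp only [Algebra.smul_def, map_neg]
    have h1 : bs (g 1) / bs (g 0) * bs (g 0) = bs (g 1) := div_mul_cancel₀ _ h0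
    have h2 : bs (g 2) / bs (g 0) * bs (g 0) = bs (g 2) := div_mul_cancel₀ _ h0
    refine mul_right_cancel₀ her ?_
    linear_combination bs (g 0) * hE' - algebraMap F K a * e r * h1 - algebraMap F K b * e r * h2
  have := Fintype.linearIndependent_iff.1 hg ![-c, a, b] (by
    simpa [Fin.sum_univ_three] using key)
  exact ⟨by simpa using this 1, by simpa using this 2⟩

/-- The version of `exists_pair` for the subspace of vectors vanishing at `i` and `j`. -/
lemma exists_pair_of_pivots [Finite F] (i j : Fin 5) :
    ∃ A B : (Fin 5 → F) →ₗ[F] (Fin 5 → F),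
      (∀ r, A r i = 0 ∧ A r j = 0 ∧ B r i = 0 ∧ B r j = 0) ∧
      ∀ (a b c : F) (r : Fin 5 → F), r i = 0 → r j = 0 → r ≠ 0 →
        a • A r + b • B r = c • r → a = 0 ∧ b = 0 := by
  let π : (Fin 5 → F) →ₗ[F] F × F := (LinearMap.proj i).prod (LinearMap.proj j)
  have hfin : 3 ≤ finrank F (LinearMap.ker π) := by
    have h1 := LinearMap.finrank_range_add_finrank_ker π
    have h2 := Submodule.finrank_le (LinearMap.range π)
    simp at h1 h2
    omega
  obtain ⟨A, B, hAB⟩ := exists_pair (LinearMap.ker π) hfin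
  obtain ⟨P, hP⟩ := LinearMap.exists_leftInverse_of_injective (LinearMap.ker π).subtype
    (Submodule.ker_subtype _)
  have hP' : ∀ r : LinearMap.ker π, P r = r := fun r => LinearMap.congr_fun hP r
  have hmem : ∀ r : LinearMap.ker π, (r : Fin 5 → F) i = 0 ∧ (r : Fin 5 → F) j = 0 := by
    intro r
    have := r.2
    rw [LinearMap.mem_ker] at this
    exact Prod.mk.injEq _ _ _ _ ▸ this
  refine ⟨(LinearMap.ker π).subtype ∘ₗ A ∘ₗ P, (LinearMap.ker π).subtype ∘ₗ B ∘ₗ P, ?_, ?_⟩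
  · intro r
    exact ⟨(hmem _).1, (hmem _).2, (hmem _).1, (hmem _).2⟩
  · intro a b c r hi hj hr hE
    have hrm : r ∈ LinearMap.ker π := by
      rw [LinearMap.mem_ker]
      exact Prod.ext hi hj
    have hPr : P r = ⟨r, hrm⟩ := hP' ⟨r, hrm⟩
    refine hAB a b c ⟨r, hrm⟩ (by simpa using hr) ?_
    apply Subtype.ext
    simpa [hPr] using hE

section Comb

variable {V : Type*} [AddCommGroup V] [Module F V]

/-- The linear map `c ↦ c₀ x + c₁ y + c₂ z`. -/
def comb (x y z : V) : (Fin 3 → F) →ₗ[F] V :=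
  (LinearMap.proj 0).smulRight x + (LinearMap.proj 1).smulRight y + (LinearMap.proj 2).smulRight z

lemma comb_apply (x y z : V) (c : Fin 3 → F) :
    comb x y z c = c 0 • x + c 1 • y + c 2 • z := rfl

/-- If `x`, `y`, `A x + B y` were all multiples of one vector, then `x` or `y` would be an
eigenvector of a nontrivial combination of `A` and `B`. -/
lemma finrank_ker_comb_le_one [Module.Finite F V] (A B : V →ₗ[F] V) (x y : V)
    (hxy : x ≠ 0 ∨ y ≠ 0)
    (hx : ∀ a b c : F, x ≠ 0 → a • A x + b • B x = c • x → a = 0 ∧ b = 0)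
    (hy : ∀ a b c : F, y ≠ 0 → a • A y + b • B y = c • y → a = 0 ∧ b = 0) :
    finrank F (LinearMap.ker (comb (F := F) x y (A x + B y))) ≤ 1 := by
  by_contra hcon
  have h1 := LinearMap.finrank_range_add_finrank_ker (comb (F := F) x y (A x + B y))
  simp only [finrank_fintype_fun_eq_card, Fintype.card_fin] at h1
  have h2 : finrank F (LinearMap.range (comb (F := F) x y (A x + B y))) ≤ 1 := by omega
  obtain ⟨⟨v, hv⟩, hspan⟩ := finrank_le_one_iff.1 h2
  have hs : ∀ w ∈ LinearMap.range (comb (F := F) x y (A x + B y)), ∃ c : F, c • v = w := by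
    intro w hw
    obtain ⟨c, hc⟩ := hspan ⟨w, hw⟩
    exact ⟨c, congrArg Subtype.val hc⟩
  obtain ⟨s, hsx⟩ := hs x ⟨![1, 0, 0], by simp [comb_apply]⟩
  obtain ⟨t, hty⟩ := hs y ⟨![0, 1, 0], by simp [comb_apply]⟩
  obtain ⟨u, huz⟩ := hs (A x + B y) ⟨![0, 0, 1], by simp [comb_apply]⟩
  rcases hxy with h0 | h0
  · have hs0 : s ≠ 0 := by rintro rfl; simp at hsx; exact h0 hsx.symm
    have hyx : y = (t / s) • x := by
      rw [← hty, ← hsx, smul_smul, div_mul_cancel₀ _ hs0]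
    have hz : A x + B y = (u / s) • x := by
      rw [← huz, ← hsx, smul_smul, div_mul_cancel₀ _ hs0]
    exact one_ne_zero (hx 1 (t / s) (u / s) h0 (by rw [← hz, hyx]; simp)).1
  · have ht0 : t ≠ 0 := by rintro rfl; simp at hty; exact h0 hty.symm
    have hxy : x = (s / t) • y := by
      rw [← hty, ← hsx, smul_smul, div_mul_cancel₀ _ ht0]
    have hz : A x + B y = (u / t) • y := by
      rw [← huz, ← hty, smul_smul, div_mul_cancel₀ _ ht0]
    exact one_ne_zero (hy (s / t) 1 (u / t) h0 (by rw [← hz, hxy]; simp)).2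

/-- A subspace is at most 1-dimensional if it embeds into one. -/
lemma finrank_le_one_of_map {M N : Type*} [AddCommGroup M] [Module F M]
    [AddCommGroup N] [Module F N] (U : Submodule F M) (h : M →ₗ[F] N) (K : Submodule F N)
    [Module.Finite F K] (hK : finrank F K ≤ 1) (hmap : ∀ v ∈ U, h v ∈ K)
    (hinj : ∀ v ∈ U, h v = 0 → v = 0) : finrank F U ≤ 1 := by
  refine le_trans (LinearMap.finrank_le_finrank_of_injective (f := h.restrict hmap) ?_) hK
  rw [injective_iff_map_eq_zero]
  intro v hv
  exact Subtype.ext (hinj v v.2 (congrArg Subtype.val hv))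

end Comb

/-! ### The codewords -/

/-- `𝔽^8`, written as the product of a quotient part `𝔽^3` and the subspace part `𝔽^5`. -/
abbrev Amb (F : Type*) := (Fin 3 → F) × (Fin 5 → F)

/-- The span of the rows `(φ e₀, x)`, `(φ e₁, y)`, `(φ e₂, z)`. -/
def word (φ : (Fin 3 → F) →ₗ[F] (Fin 3 → F)) (x y z : Fin 5 → F) : Submodule F (Amb F) :=
  LinearMap.range (φ.prod (comb x y z))

lemma mem_word {φ : (Fin 3 → F) →ₗ[F] (Fin 3 → F)} {x y z : Fin 5 → F} {v : Amb F} :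
    v ∈ word φ x y z ↔ ∃ c, φ c = v.1 ∧ c 0 • x + c 1 • y + c 2 • z = v.2 := by
  simp only [word, LinearMap.mem_range, Prod.ext_iff]
  rfl

/-- The map `c ↦ c₂ f`, which places the first two rows of a codeword inside `0 × 𝔽^5`. -/
def top (f : Fin 3 → F) : (Fin 3 → F) →ₗ[F] (Fin 3 → F) := (LinearMap.proj 2).smulRight f

lemma top_apply (f c : Fin 3 → F) : top f c = c 2 • f := rfl

/-- Five pairwise non-proportional vectors of `𝔽^3`, one for each class of pivot pairs. -/
def dir (F : Type*) [Field F] : Fin 5 → Fin 3 → F :=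
  ![![1, 0, 0], ![1, 1, 0], ![0, 1, 0], ![0, 0, 1], ![1, 0, 1]]

lemma dir_indep {s t : Fin 5} (h : s ≠ t) {a b : F} (hab : a • dir F s = b • dir F t) :
    a = 0 := by
  have h0 := congrFun hab 0
  have h1 := congrFun hab 1
  have h2 := congrFun hab 2
  fin_cases s <;> fin_cases t <;> simp [dir] at h h0 h1 h2 ⊢ <;> simp_all

lemma dir_ne_zero (s : Fin 5) : dir F s ≠ 0 := by
  intro h
  have h0 := congrFun h 0
  have h1 := congrFun h 1
  have h2 := congrFun h 2
  fin_cases s <;> simp [dir] at h0 h1 h2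

/-- `x`, `y` is a reduced row echelon basis with pivots `i < j`. -/
def Echelon (i j : Fin 5) (x y : Fin 5 → F) : Prop :=
  (x i = 1 ∧ x j = 0 ∧ ∀ k < i, x k = 0) ∧ (y j = 1 ∧ ∀ k < j, y k = 0)

/-- A nonzero combination of an echelon basis has its leading position at a pivot. -/
lemma Echelon.lead {i j : Fin 5} (hij : i < j) {x y : Fin 5 → F} (h : Echelon i j x y) (a b : F) :
    a • x + b • y = 0 ∨ ∃ l, (l = i ∨ l = j) ∧ (a • x + b • y) l ≠ 0 ∧
      ∀ k < l, (a • x + b • y) k = 0 := by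
  obtain ⟨⟨hxi, hxj, hx⟩, hyj, hy⟩ := h
  by_cases ha : a = 0
  · by_cases hb : b = 0
    · left; simp [ha, hb]
    · right
      exact ⟨j, Or.inr rfl, by simp [ha, hb, hyj], fun k hk => by simp [ha, hy k hk]⟩
  · right
    exact ⟨i, Or.inl rfl, by simp [ha, hxi, hy i hij],
      fun k hk => by simp [hx k hk, hy k (hk.trans hij)]⟩

/-- Any common nonzero vector of two echelon spans has its leading position at a common pivot. -/
lemma Echelon.common {i j i' j' : Fin 5} (hij : i < j) (hij' : i' < j') {x y x' y' : Fin 5 → F}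
    (h : Echelon i j x y) (h' : Echelon i' j' x' y') {v : Fin 5 → F} {a b a' b' : F}
    (hv : a • x + b • y = v) (hv' : a' • x' + b' • y' = v) :
    v = 0 ∨ ∃ l, (l = i ∨ l = j) ∧ (l = i' ∨ l = j') ∧ v l ≠ 0 := by
  rcases h.lead hij a b with h0 | ⟨l, hl, hl0, hl1⟩
  · exact Or.inl (hv ▸ h0)
  rcases h'.lead hij' a' b' with h0 | ⟨l', hl', hl0', hl1'⟩
  · exact Or.inl (hv' ▸ h0)
  rw [hv] at hl0 hl1
  rw [hv'] at hl0' hl1'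
  rcases lt_trichotomy l l' with hlt | rfl | hlt
  · exact absurd (hl1' l hlt) hl0
  · exact Or.inr ⟨l, hl, hl', hl0⟩
  · exact absurd (hl1 l' hlt) hl0'

/-- Pivot pairs. -/
abbrev Piv := {p : Fin 5 × Fin 5 // p.1 < p.2}

/-- The class `i + j` modulo 5 of a pivot pair. -/
def Piv.col (p : Piv) : Fin 5 := p.1.1 + p.1.2

/-- Different pivot pairs share at most one pivot `m`. -/
lemma Piv.exists_common : ∀ p p' : Piv, p ≠ p' → ∃ m, ∀ l, (l = p.1.1 ∨ l = p.1.2) →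
    (l = p'.1.1 ∨ l = p'.1.2) → l = m := by
  decide

lemma Piv.disjoint_of_col : ∀ p p' : Piv, p ≠ p' → p.col = p'.col →
    ∀ l, (l = p.1.1 ∨ l = p.1.2) → (l = p'.1.1 ∨ l = p'.1.2) → False := by
  decide

lemma finrank_word {φ : (Fin 3 → F) →ₗ[F] (Fin 3 → F)} {x y z : Fin 5 → F}
    (h : ∀ c, φ c = 0 → c 0 • x + c 1 • y + c 2 • z = 0 → c = 0) :
    finrank F (word φ x y z) = 3 := by
  rw [word, LinearMap.finrank_range_of_inj]
  · simp
  · rw [injective_iff_map_eq_zero]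
    intro c hc
    exact h c (congrArg Prod.fst hc) (congrArg Prod.snd hc)

lemma finrank_word_id (x y z : Fin 5 → F) :
    finrank F (word LinearMap.id x y z) = 3 :=
  finrank_word fun _ hc _ => hc

lemma finrank_word_top {i j : Fin 5} (hij : i < j) {x y z : Fin 5 → F} (h : Echelon i j x y)
    (s : Fin 5) : finrank F (word (top (dir F s)) x y z) = 3 := by
  refine finrank_word fun c hc hc' => ?_
  rw [top_apply, smul_eq_zero, or_iff_left (dir_ne_zero s)] at hc
  obtain ⟨⟨hxi, hxj, hx⟩, hyj, hy⟩ := h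
  have h1 := congrFun hc' i
  have h2 := congrFun hc' j
  simp [hc, hxi, hxj, hyj, hy i hij] at h1 h2
  ext k
  fin_cases k <;> simp [h1, h2, hc]

/-! ### Intersections of codewords -/

/-- The space of the first family given by `x`, `y`. -/
def word₁ (A B : (Fin 5 → F) →ₗ[F] (Fin 5 → F)) (x y : Fin 5 → F) : Submodule F (Amb F) :=
  word LinearMap.id x y (A x + B y)

/-- The space of the second family given by a class `s` and an echelon basis `x`, `y`. -/
def word₂ (A B : (Fin 5 → F) →ₗ[F] (Fin 5 → F)) (s : Fin 5) (x y : Fin 5 → F) :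
    Submodule F (Amb F) :=
  word (top (dir F s)) x y (A x + B y)

lemma inf_word₁ {A B : (Fin 5 → F) →ₗ[F] (Fin 5 → F)}
    (hAB : ∀ (a b c : F) (r : Fin 5 → F), r ≠ 0 → a • A r + b • B r = c • r → a = 0 ∧ b = 0)
    {x y x' y' : Fin 5 → F} (hne : (x, y) ≠ (x', y')) :
    finrank F (word₁ A B x y ⊓ word₁ A B x' y' : Submodule F (Amb F)) ≤ 1 := by
  have hK := finrank_ker_comb_le_one A B (x - x') (y - y')
    (by
      by_contra! hcon
      exact hne (Prod.ext (sub_eq_zero.1 hcon.1) (sub_eq_zero.1 hcon.2)))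
    (fun a b c => hAB a b c _) (fun a b c => hAB a b c _)
  refine finrank_le_one_of_map _ (LinearMap.fst F _ _) _ hK ?_ ?_
  · rintro ⟨u, v⟩ ⟨hU, hU'⟩
    obtain ⟨c, hc, hv⟩ := mem_word.1 hU
    obtain ⟨c', hc', hv'⟩ := mem_word.1 hU'
    simp only [LinearMap.id_apply] at hc hc'
    subst hc hc'
    rw [LinearMap.mem_ker, comb_apply, ← sub_eq_zero.2 (hv.trans hv'.symm)]
    simp only [LinearMap.fst_apply, map_sub]
    module
  · rintro ⟨u, v⟩ ⟨hU, -⟩ h0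
    obtain ⟨c, hc, hv⟩ := mem_word.1 hU
    simp only [LinearMap.id_apply] at hc
    simp only [LinearMap.fst_apply] at h0
    subst h0 hc
    simp only [Pi.zero_apply, zero_smul, add_zero] at hv
    rw [← hv]
    rfl

lemma inf_word₁_word₂ (A B A' B' : (Fin 5 → F) →ₗ[F] (Fin 5 → F)) (s : Fin 5)
    (x y x' y' : Fin 5 → F) :
    finrank F (word₁ A B x y ⊓ word₂ A' B' s x' y' : Submodule F (Amb F)) ≤ 1 := by
  refine finrank_le_one_of_map _ (LinearMap.fst F _ _) (F ∙ dir F s) ?_ ?_ ?_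
  · rw [finrank_span_singleton (dir_ne_zero s)]
  · rintro ⟨u, v⟩ ⟨-, hU'⟩
    obtain ⟨c, hc, -⟩ := mem_word.1 hU'
    exact Submodule.mem_span_singleton.2 ⟨c 2, hc⟩
  · rintro ⟨u, v⟩ ⟨hU, -⟩ h0
    obtain ⟨c, hc, hv⟩ := mem_word.1 hU
    simp only [LinearMap.id_apply] at hc
    simp only [LinearMap.fst_apply] at h0
    subst h0 hc
    simp only [Pi.zero_apply, zero_smul, add_zero] at hv
    rw [← hv]
    rfl

/-- Spaces of the second family with different pivot pairs. -/
lemma inf_word₂_of_ne (A B A' B' : (Fin 5 → F) →ₗ[F] (Fin 5 → F)) {p p' : Piv} (hp : p ≠ p')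
    {x y x' y' : Fin 5 → F} (h : Echelon p.1.1 p.1.2 x y) (h' : Echelon p'.1.1 p'.1.2 x' y') :
    finrank F (word₂ A B p.col x y ⊓ word₂ A' B' p'.col x' y' : Submodule F (Amb F)) ≤ 1 := by
  -- A common vector lying in `0 × 𝔽^5` lies in the two echelon spans.
  have key : ∀ v : Fin 5 → F, ((0, v) : Amb F) ∈ word₂ A B p.col x y →
      ((0, v) : Amb F) ∈ word₂ A' B' p'.col x' y' →
      v = 0 ∨ ∃ l, (l = p.1.1 ∨ l = p.1.2) ∧ (l = p'.1.1 ∨ l = p'.1.2) ∧ v l ≠ 0 := by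
    intro v hU hU'
    obtain ⟨c, hc, hv⟩ := mem_word.1 hU
    obtain ⟨c', hc', hv'⟩ := mem_word.1 hU'
    rw [top_apply, smul_eq_zero, or_iff_left (dir_ne_zero _)] at hc hc'
    rw [hc, zero_smul, add_zero] at hv
    rw [hc', zero_smul, add_zero] at hv'
    exact h.common p.2 p'.2 h' hv hv'
  by_cases hcol : p.col = p'.col
  · refine finrank_le_one_of_map _ (LinearMap.fst F _ _) (F ∙ dir F p.col) ?_ ?_ ?_
    · rw [finrank_span_singleton (dir_ne_zero _)]
    · rintro ⟨u, v⟩ ⟨hU, -⟩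
      obtain ⟨c, hc, -⟩ := mem_word.1 hU
      exact Submodule.mem_span_singleton.2 ⟨c 2, hc⟩
    · rintro ⟨u, v⟩ ⟨hU, hU'⟩ h0
      simp only [LinearMap.fst_apply] at h0
      subst h0
      rcases key v hU hU' with h0 | ⟨l, hl, hl', -⟩
      · rw [h0]; rfl
      · exact (Piv.disjoint_of_col p p' hp hcol l hl hl').elim
  · obtain ⟨m, hm⟩ := Piv.exists_common p p' hp
    refine finrank_le_one_of_map _ (LinearMap.proj m ∘ₗ LinearMap.snd F _ _) (⊤ : Submodule F F)
      (by simp) (fun _ _ => Submodule.mem_top) ?_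
    rintro ⟨u, v⟩ ⟨hU, hU'⟩ h0
    have hu : u = 0 := by
      obtain ⟨c, hc, -⟩ := mem_word.1 hU
      obtain ⟨c', hc', -⟩ := mem_word.1 hU'
      rw [top_apply] at hc hc'
      have := dir_indep hcol (hc.trans hc'.symm)
      rw [this, zero_smul] at hc
      exact hc.symm
    subst hu
    rcases key v hU hU' with hv | ⟨l, hl, hl', hv⟩
    · rw [hv]; rfl
    · rw [hm l hl hl'] at hv
      exact absurd h0 hv

/-- Spaces of the second family with the same pivot pair: the pivot coordinates and the
coefficient of `dir F s` determine a vector of the intersection. -/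
lemma inf_word₂ {A B : (Fin 5 → F) →ₗ[F] (Fin 5 → F)} {i j : Fin 5} (hij : i < j) (s : Fin 5)
    (hz : ∀ r, A r i = 0 ∧ A r j = 0 ∧ B r i = 0 ∧ B r j = 0)
    (hAB : ∀ (a b c : F) (r : Fin 5 → F), r i = 0 → r j = 0 → r ≠ 0 →
      a • A r + b • B r = c • r → a = 0 ∧ b = 0)
    {x y x' y' : Fin 5 → F} (h : Echelon i j x y) (h' : Echelon i j x' y')
    (hne : (x, y) ≠ (x', y')) :
    finrank F (word₂ A B s x y ⊓ word₂ A B s x' y' : Submodule F (Amb F)) ≤ 1 := by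
  obtain ⟨⟨hxi, hxj, hx⟩, hyj, hy⟩ := h
  obtain ⟨⟨hxi', hxj', hx'⟩, hyj', hy'⟩ := h'
  have hyi := hy i hij
  have hyi' := hy' i hij
  have hK := finrank_ker_comb_le_one A B (x - x') (y - y')
    (by
      by_contra! hcon
      exact hne (Prod.ext (sub_eq_zero.1 hcon.1) (sub_eq_zero.1 hcon.2)))
    (fun a b c => hAB a b c _ (by simp [hxi, hxi']) (by simp [hxj, hxj']))
    (fun a b c => hAB a b c _ (by simp [hyi, hyi']) (by simp [hyj, hyj']))
  obtain ⟨m, hm⟩ : ∃ m, dir F s m ≠ 0 := by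
    by_contra! hcon
    exact dir_ne_zero s (funext hcon)
  -- The map recovering the coefficient vector `c` of an element of either space.
  let g : Amb F →ₗ[F] (Fin 3 → F) := LinearMap.pi
    ![LinearMap.proj i ∘ₗ LinearMap.snd F _ _, LinearMap.proj j ∘ₗ LinearMap.snd F _ _,
      (dir F s m)⁻¹ • (LinearMap.proj m ∘ₗ LinearMap.fst F _ _)]
  have hg : ∀ (x y : Fin 5 → F), x i = 1 → x j = 0 → y i = 0 → y j = 1 → ∀ (c : Fin 3 → F)
      (u : Amb F), top (dir F s) c = u.1 → c 0 • x + c 1 • y + c 2 • (A x + B y) = u.2 →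
      g u = c := by
    intro x y h1 h2 h3 h4 c u hu1 hu2
    ext k
    fin_cases k
    · simp [g, ← hu2, h1, h3, hz]
    · simp [g, ← hu2, h2, h4, hz]
    · simp [g, ← hu1, top_apply]
      field_simp
  refine finrank_le_one_of_map _ g _ hK ?_ ?_
  · rintro u ⟨hU, hU'⟩
    obtain ⟨c, hc, hv⟩ := mem_word.1 hU
    obtain ⟨c', hc', hv'⟩ := mem_word.1 hU'
    have e1 := hg x y hxi hxj hyi hyj c u hc hv
    have e2 := hg x' y' hxi' hxj' hyi' hyj' c' u hc' hv'
    rw [e1] at e2 ⊢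
    subst e2
    rw [LinearMap.mem_ker, comb_apply, ← sub_eq_zero.2 (hv.trans hv'.symm)]
    simp only [map_sub]
    module
  · rintro u ⟨hU, -⟩ h0
    obtain ⟨c, hc, hv⟩ := mem_word.1 hU
    rw [hg x y hxi hxj hyi hyj c u hc hv] at h0
    subst h0
    refine Prod.ext ?_ ?_
    · rw [← hc, map_zero]; rfl
    · simp [← hv]

/-! ### Counting -/

open Classical in
lemma card_echelon [Fintype F] (i j : Fin 5) (hij : i < j) :
    Fintype.card {t : (Fin 5 → F) × (Fin 5 → F) // Echelon i j t.1 t.2} =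
      Fintype.card F ^ ((3 - (i : ℕ)) + (4 - (j : ℕ))) := by
  -- Each coordinate is either prescribed or free.
  let X : Fin 5 → Finset F := fun k =>
    if k < i ∨ k = j then {0} else if k = i then {1} else Finset.univ
  let Y : Fin 5 → Finset F := fun k =>
    if k < j then {0} else if k = j then {1} else Finset.univ
  have hX : ∀ x : Fin 5 → F, (x i = 1 ∧ x j = 0 ∧ ∀ k < i, x k = 0) ↔
      x ∈ Fintype.piFinset X := by
    intro x
    simp only [Fintype.mem_piFinset, X]
    constructor
    · rintro ⟨h1, h2, h3⟩ k
      split_ifs with ha hb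
      · rcases ha with ha | rfl <;> simp [*]
      · simp [*]
      · simp
    · intro h
      refine ⟨by simpa [hij.ne] using h i, by simpa using h j, fun k hk => ?_⟩
      simpa [hk] using h k
  have hY : ∀ y : Fin 5 → F, (y j = 1 ∧ ∀ k < j, y k = 0) ↔ y ∈ Fintype.piFinset Y := by
    intro y
    simp only [Fintype.mem_piFinset, Y]
    constructor
    · rintro ⟨h1, h2⟩ k
      split_ifs with ha hb <;> simp [*]
    · intro h
      refine ⟨by simpa using h j, fun k hk => ?_⟩
      simpa [hk] using h k
  rw [Fintype.card_of_subtype (Fintype.piFinset X ×ˢ Fintype.piFinset Y)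
    (fun t => by rw [Finset.mem_product, ← hX, ← hY]; rfl), Finset.card_product,
    Fintype.card_piFinset, Fintype.card_piFinset]
  clear hX hY
  simp only [X, Y, Fin.prod_univ_five]
  fin_cases i <;> fin_cases j <;> simp at hij <;> simp <;> ring

open Classical in
lemma card_index [Fintype F] :
    Fintype.card (((Fin 5 → F) × (Fin 5 → F)) ⊕
      (Σ p : Piv, {t : (Fin 5 → F) × (Fin 5 → F) // Echelon p.1.1 p.1.2 t.1 t.2})) =
      Fintype.card F ^ 10 + Fintype.card F ^ 6 + Fintype.card F ^ 5 + 2 * Fintype.card F ^ 4 +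
        2 * Fintype.card F ^ 3 + 2 * Fintype.card F ^ 2 + Fintype.card F + 1 := by
  rw [Fintype.card_sum, Fintype.card_sigma]
  have : ∀ p : Piv, Fintype.card {t : (Fin 5 → F) × (Fin 5 → F) // Echelon p.1.1 p.1.2 t.1 t.2} =
      Fintype.card F ^ ((3 - (p.1.1 : ℕ)) + (4 - (p.1.2 : ℕ))) :=
    fun p => card_echelon _ _ p.2
  rw [Finset.sum_congr rfl fun p _ => this p,
    ← Finset.sum_subtype (Finset.univ.filter fun p : Fin 5 × Fin 5 => p.1 < p.2) (by simp)
      (fun p : Fin 5 × Fin 5 => Fintype.card F ^ ((3 - (p.1 : ℕ)) + (4 - (p.2 : ℕ)))),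
    Finset.sum_filter, Fintype.sum_prod_type]
  simp [Fin.sum_univ_five]
  ring

open Classical in
/-- A family of pairwise almost disjoint 3-dimensional spaces is injective, hence its range is a
code; the ambient space is transported to `𝔽^8` along a linear equivalence. -/
lemma exists_code {J : Type*} [Fintype J] (w : J → Submodule F (Amb F))
    (h3 : ∀ t, finrank F (w t) = 3)
    (h1 : ∀ s t, s ≠ t → finrank F (w s ⊓ w t : Submodule F (Amb F)) ≤ 1) :
    ∃ C : Finset (Submodule F (Fin 8 → F)), C.card = Fintype.card J ∧
      (∀ U ∈ C, finrank F U = 3) ∧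
      (∀ U ∈ C, ∀ V ∈ C, U ≠ V →
        4 ≤ 2 * (3 - finrank F (U ⊓ V : Submodule F (Fin 8 → F)))) := by
  let e : Amb F ≃ₗ[F] (Fin 8 → F) := LinearEquiv.ofFinrankEq _ _ (by simp)
  have hinj : Function.Injective fun t => (w t).map e.toLinearMap := by
    intro s t hst
    by_contra hne
    have := h1 s t hne
    rw [Submodule.map_injective_of_injective e.injective hst, inf_idem, h3] at this
    omega
  refine ⟨Finset.univ.image fun t => (w t).map e.toLinearMap, ?_, ?_, ?_⟩
  · rw [Finset.card_image_of_injective _ hinj, Finset.card_univ]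
  · intro U hU
    obtain ⟨t, -, rfl⟩ := Finset.mem_image.1 hU
    exact (LinearEquiv.finrank_map_eq e (w t)).trans (h3 t)
  · intro U hU V hV hne
    obtain ⟨s, -, rfl⟩ := Finset.mem_image.1 hU
    obtain ⟨t, -, rfl⟩ := Finset.mem_image.1 hV
    have hst : s ≠ t := fun h => hne (by rw [h])
    have := h1 s t hst
    have h2 := LinearEquiv.finrank_map_eq e (w s ⊓ w t)
    rw [← Submodule.map_inf _ e.injective]
    change finrank F (Submodule.map e.toLinearMap (w s ⊓ w t)) = _ at h2
    omega

end CDC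

/-- Over any finite field with `q` elements there exists a constant
dimension code of 3-dimensional subspaces of `𝔽_q^8` of cardinality `q^10 + q^6 + q^5 + 2*q^4 + 2*q^3 + 2*q^2 + q + 1`
with minimum subspace distance 4. -/
theorem constant_dimension_code_G3_8
    (𝔽 : Type*) [Field 𝔽] [Fintype 𝔽] (q : ℕ) (hq : Fintype.card 𝔽 = q) :
    ∃ C : Finset (Submodule 𝔽 (Fin 8 → 𝔽)),
      C.card = q^10 + q^6 + q^5 + 2*q^4 + 2*q^3 + 2*q^2 + q + 1 ∧
      (∀ U ∈ C, Module.finrank 𝔽 U = 3) ∧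
      (∀ U ∈ C, ∀ V ∈ C, U ≠ V →
        4 ≤ 2 * (3 - Module.finrank 𝔽 (U ⊓ V : Submodule 𝔽 (Fin 8 → 𝔽)))) := by
  classical
  subst hq
  obtain ⟨A, B, hAB⟩ := CDC.exists_pair (F := 𝔽) (Fin 5 → 𝔽) (by simp)
  choose A' B' hz hAB' using CDC.exists_pair_of_pivots (F := 𝔽)
  rw [← CDC.card_index]
  refine CDC.exists_code
    (Sum.elim (fun t => CDC.word₁ A B t.1 t.2) (fun t =>
      CDC.word₂ (A' t.1.1.1 t.1.1.2) (B' t.1.1.1 t.1.1.2) t.1.col t.2.1.1 t.2.1.2)) ?_ ?_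
  · rintro (t | ⟨p, t, ht⟩)
    · exact CDC.finrank_word_id _ _ _
    · exact CDC.finrank_word_top p.2 ht _
  · rintro (t | ⟨p, t, ht⟩) (t' | ⟨p', t', ht'⟩) hne
    · exact CDC.inf_word₁ hAB fun h => hne (congrArg Sum.inl h)
    · exact CDC.inf_word₁_word₂ _ _ _ _ _ _ _ _ _
    · rw [inf_comm]
      exact CDC.inf_word₁_word₂ _ _ _ _ _ _ _ _ _
    · by_cases hp : p = p'
      · subst hp
        refine CDC.inf_word₂ p.2 _ (hz _ _) (hAB' _ _) ht ht' fun h => hne ?_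
        obtain rfl : t = t' := h
        rfl
      · exact CDC.inf_word₂_of_ne _ _ _ _ hp ht ht'
end
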